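/- arXiv:2508.03880 — 3 statements merged into one kernel-verified Lean document; each statement's English description precedes it below -/
import Mathlib

section
/- Let 1 ≤ p ≤ ∞ and f ∈ W^{1,p}(ℝⁿ). For α ∈ (0,∞) let A_α := { x ∈ ℝⁿ : M|∇f|(x) ≤ α }, where M denotes the Hardy–Littlewood maximal operator and ∇f is the weak gradient, and let 𝒩 ⊂ ℝⁿ be the set of points x at which the limit lim_{r→0⁺} ⨍_{B(x,r)} f(y) dy does not exist or is not finite. Then the restriction of the precise representative f* to A_α \ 𝒩 is Lipschitz continuous; moreover there exists a constant C = C(n) such that |f*(x) − f*(y)| ≤ C α |x − y| for all x, y ∈ A_α \ 𝒩. -/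
open MeasureTheory Filter Metric Set
open scoped ENNReal NNReal Topology

noncomputable section

abbrev Euc (n : ℕ) := EuclideanSpace ℝ (Fin n)

/-- Degree of a multi-index. -/
def mdeg {n : ℕ} (α : Fin n → ℕ) : ℕ := ∑ i, α i

/-- Iterated partial derivative along a list of coordinate directions. -/
def listDeriv {n : ℕ} : List (Fin n) → (Euc n → ℝ) → (Euc n → ℝ)
  | [], η => η
  | i :: l, η => fun x => fderiv ℝ (listDeriv l η) x (EuclideanSpace.single i 1)

/-- The partial derivative `D^α η` associated to a multi-index `α`. -/
def mderiv {n : ℕ} (α : Fin n → ℕ) (η : Euc n → ℝ) : Euc n → ℝ :=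
  listDeriv ((List.finRange n).flatMap fun i => List.replicate (α i) i) η

/-- `g` is the weak derivative `D^α f` on `ℝⁿ`. -/
def IsWeakDeriv {n : ℕ} (α : Fin n → ℕ) (f g : Euc n → ℝ) : Prop :=
  ∀ η : Euc n → ℝ, ContDiff ℝ (⊤ : ℕ∞) η → HasCompactSupport η →
    ∫ x, f x * mderiv α η x = (-1 : ℝ) ^ mdeg α * ∫ x, g x * η x

/-- `g` is the weak derivative `D^α f` on an open set `U`. -/
def IsWeakDerivOn {n : ℕ} (U : Set (Euc n)) (α : Fin n → ℕ) (f g : Euc n → ℝ) : Prop :=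
  ∀ η : Euc n → ℝ, ContDiff ℝ (⊤ : ℕ∞) η → HasCompactSupport η → tsupport η ⊆ U →
    ∫ x in U, f x * mderiv α η x = (-1 : ℝ) ^ mdeg α * ∫ x in U, g x * η x

/-- Membership in the Sobolev space `W^{k,p}(U)`. -/
def MemSobolevOn {n : ℕ} (k : ℕ) (p : ℝ) (U : Set (Euc n)) (f : Euc n → ℝ) : Prop :=
  MemLp f (ENNReal.ofReal p) (volume.restrict U) ∧
  ∀ α : Fin n → ℕ, mdeg α ≤ k → ∃ g : Euc n → ℝ,
    MemLp g (ENNReal.ofReal p) (volume.restrict U) ∧ IsWeakDerivOn U α f g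

/-- Membership in the local Sobolev space `W^{k,p}_loc(Ω)`. -/
def MemSobolevLoc {n : ℕ} (k : ℕ) (p : ℝ) (Ω : Set (Euc n)) (f : Euc n → ℝ) : Prop :=
  ∀ U : Set (Euc n), IsOpen U → Bornology.IsBounded U → closure U ⊆ Ω →
    MemSobolevOn k p U f

/-- The normalizing constant `γ(a)` of the Riesz kernel. -/
def rieszGamma (n : ℕ) (a : ℝ) : ℝ :=
  Real.pi ^ ((n : ℝ) / 2) * (2 : ℝ) ^ a * Real.Gamma (a / 2) / Real.Gamma (((n : ℝ) - a) / 2)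

/-- The Riesz potential `I_a * g`, valued in `ℝ≥0∞`. -/
def rieszPot {n : ℕ} (a : ℝ) (g : Euc n → ℝ) (x : Euc n) : ℝ≥0∞ :=
  (ENNReal.ofReal (rieszGamma n a))⁻¹ *
    ∫⁻ y, ENNReal.ofReal (g y) * ENNReal.ofReal (‖x - y‖ ^ (a - (n : ℝ)))

/-- The Riesz capacity `R_{a,p}`. -/
def rieszCap {n : ℕ} (a p : ℝ) (S : Set (Euc n)) : ℝ≥0∞ :=
  ⨅ (g : Euc n → ℝ) (_ : MemLp g (ENNReal.ofReal p) volume ∧ (∀ x, 0 ≤ g x) ∧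
      ∀ x ∈ S, 1 ≤ rieszPot a g x),
    ∫⁻ y, ENNReal.ofReal (g y) ^ p

/-- The precise representative of a (vector-valued) locally integrable function. -/
def preciseRepV {n : ℕ} {F : Type*} [NormedAddCommGroup F] [NormedSpace ℝ F]
    (f : Euc n → F) (x : Euc n) : F :=
  letI := Classical.propDecidable
  if h : ∃ L : F, Tendsto (fun ε : ℝ => ⨍ y in ball x ε, f y) (𝓝[>] (0:ℝ)) (𝓝 L)
  then h.choose else 0

/-- The precise representative of a real-valued locally integrable function. -/
def preciseRep {n : ℕ} (f : Euc n → ℝ) (x : Euc n) : ℝ := preciseRepV f x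

/-- The Hardy–Littlewood maximal function (of an `ℝ≥0∞`-valued integrand). -/
def maxFn {n : ℕ} (g : Euc n → ℝ≥0∞) (x : Euc n) : ℝ≥0∞ :=
  ⨆ (r : ℝ) (_ : 0 < r), (volume (ball x r))⁻¹ * ∫⁻ y in ball x r, g y

/-- `x` is a density point of `S`. -/
def DensityPt {n : ℕ} (S : Set (Euc n)) (x : Euc n) : Prop :=
  Tendsto (fun r : ℝ => volume (S ∩ ball x r) / volume (ball x r)) (𝓝[>] (0:ℝ)) (𝓝 1)

/-- `L` is the approximate differential of `φ` at `x₀`, relative to the domain `A`. -/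
def HasApproxDerivAt {n : ℕ} (A : Set (Euc n)) (φ : Euc n → Euc n)
    (L : Euc n →L[ℝ] Euc n) (x₀ : Euc n) : Prop :=
  DensityPt A x₀ ∧ ∀ ε : ℝ, 0 < ε →
    DensityPt {x | x ∈ A ∧ ‖φ x - φ x₀ - L (x - x₀)‖ ≤ ε * ‖x - x₀‖} x₀

end

/-- `g` is the weak gradient of `f`. -/
def IsWeakGradient {n : ℕ} (f : Euc n → ℝ) (g : Euc n → Euc n) : Prop :=
  ∀ i : Fin n, IsWeakDeriv (Pi.single i 1) f
    (fun x => (inner ℝ (g x) (EuclideanSpace.single i 1) : ℝ))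

lemma aux_mderiv {n : ℕ} (i : Fin n) (η : Euc n → ℝ) :
    mderiv (Pi.single i 1) η = fun x => fderiv ℝ η x (EuclideanSpace.single i 1) := by
  have h : ((List.finRange n).flatMap fun j =>
      List.replicate ((Pi.single i 1 : Fin n → ℕ) j) j) = [i] := by
    have h1 : ∀ l : List (Fin n), l.Nodup → (l.flatMap fun j =>
      List.replicate ((Pi.single i 1 : Fin n → ℕ) j) j) = if i ∈ l then [i] else [] := by
      intro l
      induction l with
      | nil => simp
      | cons a l ih =>
        intro hl
        rw [List.nodup_cons] at hl
        rw [List.flatMap_cons, ih hl.2]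
        by_cases hai : a = i
        · subst hai; simp [hl.1]
        · have : i ≠ a := fun h => hai h.symm
          simp [hai, this]
    rw [h1 _ (List.nodup_finRange n)]
    simp
  unfold mderiv
  rw [h]
  rfl

lemma aux_mdeg {n : ℕ} (i : Fin n) : mdeg (Pi.single i 1 : Fin n → ℕ) = 1 := by
  unfold mdeg
  simp

lemma aux_hasFDerivAt {n : ℕ} {f : Euc n → ℝ} {g : Euc n → Euc n}
    (hf : LocallyIntegrable f volume) (hg : LocallyIntegrable g volume)
    (hfg : IsWeakGradient f g) {φ : Euc n → ℝ} (hφ : ContDiff ℝ (⊤ : ℕ∞) φ)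
    (hc : HasCompactSupport φ) (x : Euc n) :
    HasFDerivAt (fun x => ∫ t, φ (x - t) • f t)
      (innerSL ℝ (∫ t, φ (x - t) • g t)) x := by
  have h0 := hc.hasFDerivAt_convolution_right
    (ContinuousLinearMap.lsmul ℝ ℝ : ℝ →L[ℝ] ℝ →L[ℝ] ℝ).flip hf
    (hφ.of_le (by exact_mod_cast le_top)) x
  have hF : (fun x => ∫ t, φ (x - t) • f t) =
      convolution f φ (ContinuousLinearMap.lsmul ℝ ℝ : ℝ →L[ℝ] ℝ →L[ℝ] ℝ).flip volume := by
    ext x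
    rfl
  rw [hF]
  suffices hh : innerSL ℝ (∫ t, φ (x - t) • g t) = convolution f (fderiv ℝ φ)
      (ContinuousLinearMap.precompR (Euc n)
        (ContinuousLinearMap.lsmul ℝ ℝ : ℝ →L[ℝ] ℝ →L[ℝ] ℝ).flip) volume x by
    rw [hh]; exact h0
  have hφc : Continuous φ := hφ.continuous
  have hint : Integrable (fun t => φ (x - t) • g t) := by
    have := hc.convolutionExists_right
      (ContinuousLinearMap.lsmul ℝ ℝ : ℝ →L[ℝ] (Euc n) →L[ℝ] (Euc n)).flip hg hφc x
    exact this
  apply ContinuousLinearMap.coe_injective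
  refine (EuclideanSpace.basisFun (Fin n) ℝ).toBasis.ext fun i => ?_
  simp only [OrthonormalBasis.coe_toBasis, EuclideanSpace.basisFun_apply,
    ContinuousLinearMap.coe_coe]
  rw [convolution_precompR_apply _ hf (hc.fderiv ℝ)
    (hφ.continuous_fderiv (by simp))]
  rw [convolution_def]
  simp only [innerSL_apply_apply]
  have hη : ContDiff ℝ (⊤ : ℕ∞) (fun t => φ (x - t)) := hφ.comp (contDiff_const.sub contDiff_id)
  have hηc : HasCompactSupport (fun t => φ (x - t)) :=
    hc.comp_homeomorph (Homeomorph.subLeft x)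
  have hw := hfg i _ hη hηc
  rw [aux_mderiv, aux_mdeg] at hw
  have hd : ∀ t, fderiv ℝ (fun t => φ (x - t)) t (EuclideanSpace.single i 1) =
      - fderiv ℝ φ (x - t) (EuclideanSpace.single i 1) := by
    intro t
    have h1 : HasFDerivAt φ (fderiv ℝ φ (x - t)) (x - t) :=
      (hφ.differentiable (by simp) _).hasFDerivAt
    have h2 : HasFDerivAt (fun t => x - t) (-ContinuousLinearMap.id ℝ (Euc n)) t :=
      (hasFDerivAt_id t).const_sub x
    have h3 : HasFDerivAt (fun t => φ (x - t))
      ((fderiv ℝ φ (x - t)).comp (-ContinuousLinearMap.id ℝ (Euc n))) t := h1.comp t h2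
    rw [h3.fderiv]
    simp
  simp only [hd, mul_neg, integral_neg, pow_one, neg_mul, one_mul, neg_inj] at hw
  simp only [ContinuousLinearMap.flip_apply, ContinuousLinearMap.lsmul_apply, smul_eq_mul]
  rw [real_inner_comm, ← integral_inner hint]
  calc _ = ∫ t, inner ℝ (g t) (EuclideanSpace.single i 1) * φ (x - t) := by
        congr 1; ext t
        rw [inner_smul_right, real_inner_comm, mul_comm]
    _ = _ := by rw [← hw]; congr 1; ext t; rw [mul_comm]

lemma aux_cont {n : ℕ} {g : Euc n → Euc n} (hg : LocallyIntegrable g volume)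
    {φ : Euc n → ℝ} (hφ : Continuous φ) (hc : HasCompactSupport φ) :
    Continuous (fun x => ∫ t, φ (x - t) • g t) :=
  hc.continuous_convolution_right
      (ContinuousLinearMap.lsmul ℝ ℝ : ℝ →L[ℝ] (Euc n) →L[ℝ] (Euc n)).flip hg hφ

lemma aux_ftc {n : ℕ} {F : Euc n → ℝ} {G : Euc n → Euc n} (hG : Continuous G)
    (hF : ∀ x, HasFDerivAt F (innerSL ℝ (G x)) x) (P Q : Euc n) :
    ‖F Q - F P‖ₑ ≤ ∫⁻ θ in Ioc (0:ℝ) 1, ‖G (P + θ • (Q - P))‖ₑ * ‖Q - P‖ₑ := by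
  have hd : ∀ θ ∈ uIcc (0:ℝ) 1, HasDerivAt (fun θ : ℝ => F (P + θ • (Q - P)))
      (inner ℝ (G (P + θ • (Q - P))) (Q - P)) θ := by
    intro θ _
    have h1 : HasDerivAt (fun θ : ℝ => P + θ • (Q - P)) (Q - P) θ := by
      simpa using ((hasDerivAt_id θ).smul_const (Q - P)).const_add P
    exact (hF _).comp_hasDerivAt θ h1
  have hcont : Continuous (fun θ : ℝ => (inner ℝ (G (P + θ • (Q - P))) (Q - P) : ℝ)) := by
    fun_prop
  have := intervalIntegral.integral_eq_sub_of_hasDerivAt hd (hcont.intervalIntegrable _ _)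
  simp only [one_smul, zero_smul, add_zero, add_sub_cancel] at this
  rw [← this, intervalIntegral.integral_of_le zero_le_one]
  refine (enorm_integral_le_lintegral_enorm _).trans (lintegral_mono fun θ => ?_)
  rw [← ofReal_norm, ← ofReal_norm, ← ofReal_norm, ← ENNReal.ofReal_mul (norm_nonneg _)]
  exact ENNReal.ofReal_le_ofReal (norm_inner_le_norm _ _)

lemma aux_ball {n : ℕ} {g : Euc n → Euc n} (hg : LocallyIntegrable g volume)
    {φ : Euc n → ℝ} (hφ : Continuous φ) (hpos : ∀ x, 0 ≤ φ x)
    (hi : ∫⁻ x, ENNReal.ofReal (φ x) = 1)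
    {δ : ℝ} (hs : Function.support φ ⊆ ball 0 δ) {α : ℝ} {x c : Euc n} {r : ℝ} (hr : 0 < r)
    (hδ : δ ≤ r) (hxc : dist c x ≤ r)
    (hx : maxFn (fun y => ENNReal.ofReal ‖g y‖) x ≤ ENNReal.ofReal α) :
    ∫⁻ z in ball c r, ‖∫ t, φ (z - t) • g t‖ₑ ≤ ENNReal.ofReal α * volume (ball x (3 * r)) := by
  have hgm : AEMeasurable (fun t => ‖g t‖ₑ) := hg.aestronglyMeasurable.enorm
  calc ∫⁻ z in ball c r, ‖∫ t, φ (z - t) • g t‖ₑ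
      ≤ ∫⁻ z in ball c r, ∫⁻ t, ENNReal.ofReal (φ (z - t)) * ‖g t‖ₑ := by
        refine lintegral_mono fun z => (enorm_integral_le_lintegral_enorm _).trans ?_
        refine lintegral_mono fun t => ?_
        rw [enorm_smul, Real.enorm_of_nonneg (hpos _)]
    _ = ∫⁻ t, ∫⁻ z in ball c r, ENNReal.ofReal (φ (z - t)) * ‖g t‖ₑ := by
        rw [lintegral_lintegral_swap]
        have h1 : Continuous (fun q : Euc n × Euc n => φ (q.1 - q.2)) := by fun_prop
        exact (h1.measurable.ennreal_ofReal.aemeasurable).mul hgm.comp_snd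
    _ ≤ ∫⁻ t, (ball x (3 * r)).indicator (fun t => ‖g t‖ₑ) t := by
        refine lintegral_mono fun t => ?_
        simp only
        have h1 : Continuous (fun z : Euc n => φ (z - t)) := by fun_prop
        rw [lintegral_mul_const _ h1.measurable.ennreal_ofReal]
        by_cases ht : t ∈ ball x (3 * r)
        · rw [indicator_of_mem ht]
          refine mul_le_of_le_one_left zero_le ?_
          refine (setLIntegral_le_lintegral _ _).trans ?_
          rw [lintegral_sub_right_eq_self (fun z => ENNReal.ofReal (φ z)) t, hi]
        · rw [indicator_of_notMem ht]
          have : ∫⁻ z in ball c r, ENNReal.ofReal (φ (z - t)) = 0 := by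
            rw [setLIntegral_congr_fun measurableSet_ball (g := fun _ => 0)]
            · simp
            · intro z hz
              simp only [ENNReal.ofReal_eq_zero]
              by_contra! hne
              have h1 := hs (Function.mem_support.2 hne.ne')
              apply ht
              rw [mem_ball, dist_zero_right, ← dist_eq_norm] at h1
              rw [mem_ball] at hz ⊢
              have h2 := dist_triangle4 t z c x
              rw [dist_comm t z] at h2
              linarith
          rw [this, zero_mul]
    _ = ∫⁻ t in ball x (3 * r), ‖g t‖ₑ := lintegral_indicator measurableSet_ball _
    _ ≤ _ := by
        have h1 := (le_iSup₂ (f := fun (r : ℝ) (_ : 0 < r) => (volume (ball x r))⁻¹ *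
          ∫⁻ y in ball x r, ENNReal.ofReal ‖g y‖) (3 * r) (by positivity)).trans hx
        simp only [ofReal_norm] at h1
        rw [mul_comm] at h1
        rw [← div_eq_mul_inv] at h1
        rwa [ENNReal.div_le_iff (measure_ball_pos _ _ (by positivity)).ne'
          measure_ball_lt_top.ne] at h1

lemma aux_emb {n : ℕ} (a : Euc n) {s : ℝ} (hs : 0 < s) :
    MeasurableEmbedding (fun z : Euc n => a + s • z) :=
  (measurableEmbedding_addLeft a).comp (measurableEmbedding_const_smul₀ hs.ne')

lemma aux_map {n : ℕ} (a : Euc n) {s : ℝ} (hs : 0 < s) :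
    (volume : Measure (Euc n)).map (fun z => a + s • z) =
      ENNReal.ofReal ((s ^ n)⁻¹) • volume := by
  have h1 : (fun z : Euc n => a + s • z) = (fun z => a + z) ∘ (fun z => s • z) := rfl
  rw [h1, ← Measure.map_map (by fun_prop) (by fun_prop), Measure.map_addHaar_smul _ hs.ne',
    Measure.map_smul, map_add_left_eq_self, finrank_euclideanSpace_fin,
    abs_of_nonneg (by positivity)]

lemma aux_map_ball {n : ℕ} (a : Euc n) {s : ℝ} (hs : 0 < s) :
    ((volume : Measure (Euc n)).restrict (ball 0 1)).map (fun z => a + s • z) =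
      ENNReal.ofReal ((s ^ n)⁻¹) • volume.restrict (ball a s) := by
  have hp : (fun z : Euc n => a + s • z) ⁻¹' (ball a s) = ball 0 1 := by
    ext z
    simp only [mem_preimage, mem_ball, dist_eq_norm, add_sub_cancel_left, sub_zero, norm_smul,
      Real.norm_of_nonneg hs.le]
    exact mul_lt_iff_lt_one_right hs
  rw [← hp, ← (aux_emb a hs).restrict_map, aux_map a hs, Measure.restrict_smul]

lemma aux_L4 {n : ℕ} {f : Euc n → ℝ} {g : Euc n → Euc n}
    (hf : LocallyIntegrable f volume) (hg : LocallyIntegrable g volume)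
    (hfg : IsWeakGradient f g) {φ : Euc n → ℝ} (hφ : ContDiff ℝ (⊤ : ℕ∞) φ)
    (hc : HasCompactSupport φ) (hpos : ∀ x, 0 ≤ φ x)
    (hi : ∫⁻ x, ENNReal.ofReal (φ x) = 1)
    {δ : ℝ} (hsupp : Function.support φ ⊆ ball 0 δ) {α : ℝ} {x a b : Euc n} {s t : ℝ}
    (hs : 0 < s) (ht : 0 < t) (hδs : δ ≤ s) (hδt : δ ≤ t)
    (ha : dist a x ≤ s) (hb : dist b x ≤ t)
    (hx : maxFn (fun y => ENNReal.ofReal ‖g y‖) x ≤ ENNReal.ofReal α) :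
    ∫⁻ z in ball (0 : Euc n) 1,
      ‖(∫ u, φ (a + s • z - u) • f u) - (∫ u, φ (b + t • z - u) • f u)‖ₑ ≤
      (ENNReal.ofReal α * (ENNReal.ofReal (3 ^ n) * volume (ball (0 : Euc n) 1)))
        * ENNReal.ofReal (‖a - b‖ + |s - t|) := by
  set G : Euc n → Euc n := fun x => ∫ t, φ (x - t) • g t with hG
  have hGc : Continuous G := aux_cont hg hφ.continuous hc
  calc _ ≤ ∫⁻ z in ball (0 : Euc n) 1, ∫⁻ θ in Ioc (0:ℝ) 1,
        ‖G ((b + θ • (a - b)) + (t + θ * (s - t)) • z)‖ₑ * ENNReal.ofReal (‖a - b‖ + |s - t|) := by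
        refine setLIntegral_mono' measurableSet_ball fun z hz => ?_
        refine (aux_ftc (F := fun x => ∫ u, φ (x - u) • f u) hGc
          (aux_hasFDerivAt hf hg hfg hφ hc) (b + t • z) (a + s • z)).trans ?_
        refine lintegral_mono fun θ => ?_
        have e1 : b + t • z + θ • (a + s • z - (b + t • z)) =
          (b + θ • (a - b)) + (t + θ * (s - t)) • z := by module
        simp only
        rw [e1]
        gcongr
        rw [← ofReal_norm]
        apply ENNReal.ofReal_le_ofReal
        have e2 : a + s • z - (b + t • z) = (a - b) + (s - t) • z := by module
        rw [e2]
        refine (norm_add_le _ _).trans ?_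
        gcongr
        rw [norm_smul, Real.norm_eq_abs]
        refine mul_le_of_le_one_right (abs_nonneg _) ?_
        rw [mem_ball, dist_zero_right] at hz
        exact hz.le
    _ = ∫⁻ θ in Ioc (0:ℝ) 1, ∫⁻ z in ball (0 : Euc n) 1,
        ‖G ((b + θ • (a - b)) + (t + θ * (s - t)) • z)‖ₑ * ENNReal.ofReal (‖a - b‖ + |s - t|) := by
        rw [lintegral_lintegral_swap]
        have h1 : Continuous (fun q : Euc n × ℝ =>
          ‖G ((b + q.2 • (a - b)) + (t + q.2 * (s - t)) • q.1)‖ₑ) := by fun_prop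
        exact (h1.measurable.mul_const _).aemeasurable
    _ ≤ ∫⁻ θ in Ioc (0:ℝ) 1,
        (ENNReal.ofReal α * (ENNReal.ofReal (3 ^ n) * volume (ball (0 : Euc n) 1)))
        * ENNReal.ofReal (‖a - b‖ + |s - t|) := by
        refine setLIntegral_mono' measurableSet_Ioc fun θ hθ => ?_
        have hθ1 : 0 ≤ 1 - θ := by linarith [hθ.2]
        have hθ0 : 0 ≤ θ := hθ.1.le
        set r := t + θ * (s - t) with hr
        have hr' : r = (1 - θ) * t + θ * s := by rw [hr]; ring
        have hrpos : 0 < r := by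
          rw [hr]
          rcases le_total s t with h | h
          · nlinarith
          · nlinarith
        have hδr : δ ≤ r := by
          rw [hr']; nlinarith
        have hcr : dist (b + θ • (a - b)) x ≤ r := by
          rw [dist_eq_norm] at *
          have : b + θ • (a - b) - x = (1 - θ) • (b - x) + θ • (a - x) := by module
          rw [this, hr']
          refine (norm_add_le _ _).trans ?_
          rw [norm_smul, norm_smul, Real.norm_of_nonneg hθ1, Real.norm_of_nonneg hθ0]
          gcongr
        rw [lintegral_mul_const _ (by
          have : Continuous (fun z => ‖G ((b + θ • (a - b)) + r • z)‖ₑ) := by fun_prop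
          exact this.measurable)]
        gcongr
        have h2 := aux_ball hg hφ.continuous hpos hi hsupp hrpos hδr hcr hx
        have h3 : ∫⁻ z in ball (0 : Euc n) 1, ‖G ((b + θ • (a - b)) + r • z)‖ₑ =
          ENNReal.ofReal ((r ^ n)⁻¹) * ∫⁻ z in ball (b + θ • (a - b)) r, ‖G z‖ₑ := by
          rw [← smul_eq_mul, ← lintegral_smul_measure, ← aux_map_ball _ hrpos,
            (aux_emb _ hrpos).lintegral_map]
        rw [h3]
        refine (mul_le_mul_right h2 _).trans (le_of_eq ?_)
        rw [Measure.addHaar_ball_of_pos _ _ (by positivity), finrank_euclideanSpace_fin, mul_pow,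
          ENNReal.ofReal_mul (by positivity), ENNReal.ofReal_inv_of_pos (by positivity)]
        have h4 : ENNReal.ofReal (r ^ n) ≠ 0 := by
          simp only [ne_eq, ENNReal.ofReal_eq_zero, not_le]; positivity
        calc _ = ((ENNReal.ofReal (r ^ n))⁻¹ * ENNReal.ofReal (r ^ n)) *
            (ENNReal.ofReal α * (ENNReal.ofReal (3 ^ n) * volume (ball (0 : Euc n) 1))) := by ring
          _ = _ := by rw [ENNReal.inv_mul_cancel h4 ENNReal.ofReal_ne_top, one_mul]
    _ = _ := by simp

lemma aux_L5 {n : ℕ} {f : Euc n → ℝ} {g : Euc n → Euc n}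
    (hf : LocallyIntegrable f volume) (hg : LocallyIntegrable g volume)
    (hfg : IsWeakGradient f g) {α : ℝ} {x a b : Euc n} {s t : ℝ}
    (hs : 0 < s) (ht : 0 < t)
    (ha : dist a x ≤ s) (hb : dist b x ≤ t)
    (hx : maxFn (fun y => ENNReal.ofReal ‖g y‖) x ≤ ENNReal.ofReal α) :
    ∫⁻ z in ball (0 : Euc n) 1, ‖f (a + s • z) - f (b + t • z)‖ₑ ≤
      (ENNReal.ofReal α * (ENNReal.ofReal (3 ^ n) * volume (ball (0 : Euc n) 1)))
        * ENNReal.ofReal (‖a - b‖ + |s - t|) := by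
  set d : ℕ → ℝ := fun k => min s t / (k + 1) with hd
  have hm : 0 < min s t := lt_min hs ht
  have hdpos : ∀ k, 0 < d k := fun k => by simp only [hd]; positivity
  have hdle : ∀ k, d k ≤ min s t := fun k =>
    div_le_self hm.le (by linarith [(Nat.cast_nonneg k : (0:ℝ) ≤ k)])
  let φ : ℕ → ContDiffBump (0 : Euc n) := fun k =>
    ⟨d k / 2, d k, by have := hdpos k; positivity, by have := hdpos k; linarith⟩
  have hae := ContDiffBump.ae_convolution_tendsto_right_of_locallyIntegrable
    (φ := φ) (l := atTop) (K := 2) (μ := (volume : Measure (Euc n))) (g := f)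
    (by
      have := tendsto_const_div_atTop_nhds_zero_nat (min s t)
      exact (tendsto_add_atTop_iff_nat 1).2 this |>.congr fun k => by simp [φ, hd])
    (Eventually.of_forall fun k => by simp only [φ]; linarith) hf
  set F : ℕ → Euc n → ℝ := fun k x => ∫ u, (φ k).normed volume (x - u) • f u with hF
  have hae' : ∀ᵐ y : Euc n, Tendsto (fun k => F k y) atTop (𝓝 (f y)) := by
    filter_upwards [hae] with y hy
    refine hy.congr fun k => ?_
    rw [convolution_lsmul_swap]
  have hq : ∀ (c : Euc n) {r : ℝ}, 0 < r →
      ∀ᵐ z : Euc n, Tendsto (fun k => F k (c + r • z)) atTop (𝓝 (f (c + r • z))) := by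
    intro c r hr
    have h1 : ∀ᵐ y ∂((volume : Measure (Euc n)).map (fun z => c + r • z)),
        Tendsto (fun k => F k y) atTop (𝓝 (f y)) := by
      rw [aux_map c hr]
      exact Measure.ae_smul_measure hae' _
    exact ae_of_ae_map (aux_emb c hr).measurable.aemeasurable h1
  have hFc : ∀ k, Continuous (F k) := fun k => by
    refine continuous_iff_continuousAt.2 fun y => ?_
    exact (aux_hasFDerivAt hf hg hfg (φ k).contDiff_normed (φ k).hasCompactSupport_normed
      y).continuousAt
  calc _ ≤ ∫⁻ z in ball (0 : Euc n) 1,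
        liminf (fun k => ‖F k (a + s • z) - F k (b + t • z)‖ₑ) atTop := by
        refine lintegral_mono_ae (ae_restrict_of_ae ?_)
        filter_upwards [hq a hs, hq b ht] with z h1 h2
        exact ((h1.sub h2).enorm.liminf_eq).ge
    _ ≤ liminf (fun k => ∫⁻ z in ball (0 : Euc n) 1, ‖F k (a + s • z) - F k (b + t • z)‖ₑ)
          atTop := by
        refine lintegral_liminf_le fun k => ?_
        have := hFc k
        exact Continuous.measurable (by fun_prop)
    _ ≤ _ := by
        refine liminf_le_of_le ?_ fun B hB => ?_
        · isBoundedDefault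
        · obtain ⟨k, hk⟩ := hB.exists
          refine hk.trans ?_
          refine aux_L4 hf hg hfg (φ k).contDiff_normed (φ k).hasCompactSupport_normed
            (fun x => (φ k).nonneg_normed x) ?_ (δ := d k) ?_ hs ht ((hdle k).trans (min_le_left _ _))
            ((hdle k).trans (min_le_right _ _)) ha hb hx
          · rw [← ofReal_integral_eq_lintegral_ofReal (φ k).integrable_normed
              (Eventually.of_forall fun x => (φ k).nonneg_normed x), (φ k).integral_normed]
            simp
          · rw [(φ k).support_normed_eq]

lemma aux_avg {n : ℕ} (f : Euc n → ℝ) (a : Euc n) {s : ℝ} (hs : 0 < s) :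
    ⨍ y in ball a s, f y = ⨍ z in ball (0 : Euc n) 1, f (a + s • z) := by
  rw [setAverage_eq, setAverage_eq, ← (aux_emb a hs).integral_map, aux_map_ball a hs,
    integral_smul_measure, smul_smul]
  congr 1
  rw [ENNReal.toReal_ofReal (by positivity), measureReal_def, measureReal_def,
    Measure.addHaar_ball_of_pos _ _ hs, finrank_euclideanSpace_fin, ENNReal.toReal_mul,
    ENNReal.toReal_ofReal (by positivity), mul_inv, mul_comm]

lemma aux_int {n : ℕ} {f : Euc n → ℝ} (hf : LocallyIntegrable f volume) (a : Euc n) {s : ℝ}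
    (hs : 0 < s) : IntegrableOn (fun z => f (a + s • z)) (ball (0 : Euc n) 1) := by
  have h1 : Integrable f (((volume : Measure (Euc n)).restrict (ball 0 1)).map
      (fun z => a + s • z)) := by
    rw [aux_map_ball a hs]
    refine Integrable.smul_measure ?_ ENNReal.ofReal_ne_top
    exact (hf.integrableOn_isCompact (isCompact_closedBall a s)).mono_set ball_subset_closedBall
  exact ((aux_emb a hs).integrable_map_iff).1 h1

lemma aux_L6 {n : ℕ} {f : Euc n → ℝ} {g : Euc n → Euc n}
    (hf : LocallyIntegrable f volume) (hg : LocallyIntegrable g volume)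
    (hfg : IsWeakGradient f g) {α : ℝ} (hα : 0 < α) {x a b : Euc n} {s t : ℝ}
    (hs : 0 < s) (ht : 0 < t)
    (ha : dist a x ≤ s) (hb : dist b x ≤ t)
    (hx : maxFn (fun y => ENNReal.ofReal ‖g y‖) x ≤ ENNReal.ofReal α) :
    |(⨍ y in ball a s, f y) - ⨍ y in ball b t, f y| ≤ 3 ^ n * α * (‖a - b‖ + |s - t|) := by
  have h5 := aux_L5 hf hg hfg hs ht ha hb hx
  have hv : 0 < volume.real (ball (0 : Euc n) 1) :=
    ENNReal.toReal_pos (measure_ball_pos _ _ one_pos).ne' measure_ball_lt_top.ne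
  rw [aux_avg f a hs, aux_avg f b ht, setAverage_eq, setAverage_eq, ← smul_sub,
    ← integral_sub (aux_int hf a hs) (aux_int hf b ht), smul_eq_mul, abs_mul,
    abs_of_pos (inv_pos.2 hv), inv_mul_le_iff₀ hv]
  have h6 := (enorm_integral_le_lintegral_enorm
    (μ := volume.restrict (ball (0 : Euc n) 1)) (fun z => f (a + s • z) - f (b + t • z))).trans h5
  have h7 : volume (ball (0 : Euc n) 1) = ENNReal.ofReal (volume.real (ball (0 : Euc n) 1)) := by
    rw [measureReal_def, ENNReal.ofReal_toReal measure_ball_lt_top.ne]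
  rw [h7, ← ENNReal.ofReal_mul (by positivity), ← ENNReal.ofReal_mul (by positivity),
    ← ENNReal.ofReal_mul (by positivity), ← ofReal_norm,
    ENNReal.ofReal_le_ofReal_iff (by positivity), Real.norm_eq_abs] at h6
  refine h6.trans (le_of_eq ?_)
  ring

lemma aux_L7 {n : ℕ} {f : Euc n → ℝ} {g : Euc n → Euc n}
    (hf : LocallyIntegrable f volume) (hg : LocallyIntegrable g volume)
    (hfg : IsWeakGradient f g) {α : ℝ} (hα : 0 < α) {x : Euc n} {R : ℝ} (hR : 0 < R)
    (hx : maxFn (fun y => ENNReal.ofReal ‖g y‖) x ≤ ENNReal.ofReal α)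
    (hL : ∃ L : ℝ, Tendsto (fun r : ℝ => ⨍ y in ball x r, f y) (𝓝[>] (0:ℝ)) (𝓝 L)) :
    |preciseRep f x - ⨍ y in ball x R, f y| ≤ 3 ^ n * α * R := by
  have h1 : Tendsto (fun r : ℝ => ⨍ y in ball x r, f y) (𝓝[>] (0:ℝ)) (𝓝 (preciseRep f x)) := by
    unfold preciseRep preciseRepV
    rw [dif_pos hL]
    exact hL.choose_spec
  refine le_of_tendsto (h1.sub_const (⨍ y in ball x R, f y)).abs ?_
  filter_upwards [Ioo_mem_nhdsGT hR] with r hr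
  refine (aux_L6 hf hg hfg hα hr.1 hR (by simpa using hr.1.le) (by simpa using hR.le) hx).trans ?_
  have : ‖x - x‖ + |r - R| ≤ R := by
    rw [sub_self, norm_zero, zero_add, abs_le]
    constructor <;> linarith [hr.1, hr.2]
  gcongr

/-- Lemma 4.4: the precise representative is Lipschitz on the good set
`A_α \ 𝒩`, with constant `C(n) α`. -/
theorem preciseRep_lipschitzOn_good_set {n : ℕ} :
    ∃ C : ℝ, 0 < C ∧
      ∀ (p : ℝ≥0∞), 1 ≤ p →
      ∀ (f : Euc n → ℝ) (g : Euc n → Euc n),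
        MemLp f p volume → MemLp g p volume → IsWeakGradient f g →
      ∀ α : ℝ, 0 < α →
      ∀ Aα N : Set (Euc n),
        Aα = {x | maxFn (fun y => ENNReal.ofReal ‖g y‖) x ≤ ENNReal.ofReal α} →
        N = {x | ¬ ∃ L : ℝ,
          Tendsto (fun r : ℝ => ⨍ y in ball x r, f y) (𝓝[>] (0:ℝ)) (𝓝 L)} →
        (∃ K : ℝ≥0, LipschitzOnWith K (preciseRep f) (Aα \ N)) ∧
        ∀ x ∈ Aα \ N, ∀ y ∈ Aα \ N,
          |preciseRep f x - preciseRep f y| ≤ C * α * ‖x - y‖ := by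
  have key : ∀ (p : ℝ≥0∞), 1 ≤ p → ∀ (f : Euc n → ℝ) (g : Euc n → Euc n),
        MemLp f p volume → MemLp g p volume → IsWeakGradient f g →
      ∀ α : ℝ, 0 < α →
      ∀ Aα N : Set (Euc n),
        Aα = {x | maxFn (fun y => ENNReal.ofReal ‖g y‖) x ≤ ENNReal.ofReal α} →
        N = {x | ¬ ∃ L : ℝ,
          Tendsto (fun r : ℝ => ⨍ y in ball x r, f y) (𝓝[>] (0:ℝ)) (𝓝 L)} →
        ∀ x ∈ Aα \ N, ∀ y ∈ Aα \ N,
          |preciseRep f x - preciseRep f y| ≤ (3 * 3 ^ n) * α * ‖x - y‖ := by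
    rintro p hp f g hf hg hfg α hα A N rfl rfl x ⟨hxA, hxN⟩ y ⟨hyA, hyN⟩
    simp only [mem_setOf_eq, not_not] at hxA hxN hyA hyN
    have hf' := hf.locallyIntegrable hp
    have hg' := hg.locallyIntegrable hp
    rcases eq_or_ne x y with rfl | hxy
    · simp
    have hR : 0 < ‖x - y‖ := norm_pos_iff.2 (sub_ne_zero.2 hxy)
    have h1 := aux_L7 hf' hg' hfg hα hR hxA hxN
    have h2 := aux_L7 hf' hg' hfg hα hR hyA hyN
    have h3 := aux_L6 hf' hg' hfg hα (a := x) (b := y) hR hR (by simp)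
      (by rw [dist_comm, dist_eq_norm]) hxA
    rw [sub_self, abs_zero, add_zero] at h3
    rw [abs_le] at *
    constructor <;> linarith [h1.1, h1.2, h2.1, h2.2, h3.1, h3.2]
  refine ⟨3 * 3 ^ n, by positivity, ?_⟩
  intro p hp f g hf hg hfg α hα A N hA hN
  have hk := key p hp f g hf hg hfg α hα A N hA hN
  refine ⟨⟨Real.toNNReal (3 * 3 ^ n * α), ?_⟩, hk⟩
  refine LipschitzOnWith.of_dist_le_mul fun x hx y hy => ?_
  rw [Real.coe_toNNReal _ (by positivity), Real.dist_eq, dist_eq_norm]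
  exact hk x hx y hy
end

section
/- Let k be a positive integer and 1 ≤ p < ∞ with kp < n, and let m ∈ ℕ. There exists a constant C depending only on n, k, p, m such that for every F = (F₁,…,F_m) ∈ W^{k,p}(ℝⁿ, ℝ^m) and every λ ∈ (0,∞), one has R_{k,p}({ x ∈ ℝⁿ : M|F|(x) > λ }) ≤ (C/λ^p) ‖F‖_{W^{k,p}(ℝⁿ,ℝ^m)}^p, where M|F|(x) = sup_{r>0} ⨍_{B(x,r)} |F(y)| dy and |F(y)| is the Euclidean norm of F(y). -/
open MeasureTheory Filter Metric Set
open scoped ENNReal NNReal Topology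

section AuxLemmas

open MeasureTheory.Measure

theorem aux_polar {n : ℕ} (hn : 0 < n) (f : Euc n → ℝ≥0∞) (hf : Measurable f) :
    ∫⁻ x, f x = ∫⁻ θ : sphere (0 : Euc n) 1, (∫⁻ t in Ioi (0:ℝ),
      ENNReal.ofReal (t ^ (n - 1)) * f (t • (θ : Euc n))) ∂((volume : Measure (Euc n)).toSphere) := by
  have : NeZero n := ⟨hn.ne'⟩
  have hfr : Module.finrank ℝ (Euc n) = n := by simp
  have h1 : ∫⁻ x, f x = ∫⁻ x : ({(0 : Euc n)}ᶜ : Set (Euc n)), f x ∂((volume : Measure (Euc n)).comap (↑)) := by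
    rw [lintegral_subtype_comap (measurableSet_singleton _).compl f, restrict_compl_singleton]
  have mp := (volume : Measure (Euc n)).measurePreserving_homeomorphUnitSphereProd
  have h2 : ∫⁻ x : ({(0 : Euc n)}ᶜ : Set (Euc n)), f x ∂((volume : Measure (Euc n)).comap (↑))
      = ∫⁻ z, f ((z.2 : ℝ) • (z.1 : Euc n)) ∂((volume : Measure (Euc n)).toSphere.prod
        (volumeIoiPow (Module.finrank ℝ (Euc n) - 1))) := by
    rw [← mp.lintegral_comp_emb (Homeomorph.measurableEmbedding _)]
    refine lintegral_congr fun x => ?_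
    congr 1
    have := (homeomorphUnitSphereProd (Euc n)).symm_apply_apply x
    conv_lhs => rw [← this]
    rfl
  rw [h1, h2, hfr, lintegral_prod]
  · refine lintegral_congr fun θ => ?_
    rw [volumeIoiPow, lintegral_withDensity_eq_lintegral_mul]
    · rw [← lintegral_subtype_comap measurableSet_Ioi]
      rfl
    · fun_prop
    · fun_prop
  · apply Measurable.aemeasurable
    fun_prop

theorem aux_oneD {k : ℕ} {w : ℝ → ℝ} (hw : ContDiff ℝ (⊤ : ℕ∞) w) {T : ℝ} (hT : 0 ≤ T)
    (hz : ∀ t, T < t → w t = 0) :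
    ENNReal.ofReal |w 0| ≤ ∫⁻ t in Ioi (0:ℝ),
      ENNReal.ofReal (t ^ k) * ENNReal.ofReal |iteratedDeriv (k + 1) w t| := by
  have hne : (T + 1) ≠ 0 := by positivity
  have hu : UniqueDiffOn ℝ (uIcc (T+1) 0) := uniqueDiffOn_uIcc hne
  have hw' : ∀ j : ℕ, ContDiff ℝ j w := fun j => hw.of_le (by exact_mod_cast le_top)
  have hit : ∀ j : ℕ, ∀ t ∈ uIcc (T+1) 0,
      iteratedDerivWithin j w (uIcc (T+1) 0) t = iteratedDeriv j w t := fun j t ht =>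
    iteratedDerivWithin_eq_iteratedDeriv hu (hw' j).contDiffAt ht
  have h := taylor_integral_remainder (f := w) (x := 0) (x₀ := T + 1) (n := k)
    (hw' _).contDiffOn
  have hzero : ∀ j : ℕ, iteratedDeriv j w (T+1) = 0 := by
    intro j
    have : w =ᶠ[𝓝 (T+1)] fun _ => 0 := by
      filter_upwards [lt_mem_nhds (show T < T + 1 by linarith)] with t ht using hz t ht
    rw [this.iteratedDeriv_eq]
    simp
  have hTay : taylorWithinEval w k (uIcc (T+1) 0) (T+1) 0 = 0 := by
    rw [taylor_within_apply]
    refine Finset.sum_eq_zero fun j _ => ?_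
    rw [hit j _ left_mem_uIcc, hzero, smul_zero]
  rw [hTay, sub_zero] at h
  rw [h, intervalIntegral.integral_symm, abs_neg,
    intervalIntegral.integral_of_le (by positivity), ← Real.norm_eq_abs, ofReal_norm]
  refine (enorm_integral_le_lintegral_enorm _).trans ?_
  refine (lintegral_mono_set (Ioc_subset_Ioi_self (a := T + 1) (b := 0))).trans' ?_
  refine setLIntegral_mono' measurableSet_Ioc fun t ht => ?_
  rw [hit _ t (by rw [uIcc_of_ge (by positivity)]; exact ⟨ht.1.le, ht.2⟩), smul_eq_mul, enorm_mul]
  rw [← ofReal_norm, ← ofReal_norm]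
  gcongr
  · rw [zero_sub, norm_div, norm_pow, norm_neg, Real.norm_of_nonneg ht.1.le]
    apply div_le_self (by have := ht.1; positivity)
    simp
    exact_mod_cast Nat.one_le_iff_ne_zero.2 (Nat.factorial_ne_zero k)
  · simp

theorem aux_line {n : ℕ} (u : Euc n → ℝ) (hu : ContDiff ℝ (⊤ : ℕ∞) u) (x θ : Euc n) (j : ℕ) (t : ℝ) :
    iteratedDeriv j (fun t : ℝ => u (x + t • θ)) t =
      iteratedFDeriv ℝ j u (x + t • θ) (fun _ => θ) := by
  induction j generalizing t with
  | zero => simp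
  | succ j ih =>
    rw [iteratedDeriv_succ, funext ih]
    have hd : HasFDerivAt (iteratedFDeriv ℝ j u) (fderiv ℝ (iteratedFDeriv ℝ j u) (x + t • θ)) (x + t • θ) := by
      apply DifferentiableAt.hasFDerivAt
      exact (hu.differentiable_iteratedFDeriv (by exact_mod_cast WithTop.coe_lt_top j)) _
    have hl : HasDerivAt (fun t : ℝ => x + t • θ) θ t := by
      simpa using ((hasDerivAt_id t).smul_const θ).const_add x
    have h1 := hd.comp_hasDerivAt t hl
    have h2 := ((ContinuousMultilinearMap.apply ℝ (fun _ : Fin j => Euc n) ℝ (fun _ => θ)).hasFDerivAt).comp_hasDerivAt t h1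
    have h3 := h2.deriv
    rw [iteratedFDeriv_succ_apply_left]
    exact h3

theorem aux_rep {n k : ℕ} (hn : 0 < n) (u : Euc n → ℝ) (hu : ContDiff ℝ (⊤ : ℕ∞) u)
    (hc : HasCompactSupport u) (x : Euc n) :
    ENNReal.ofReal |u x| * (volume : Measure (Euc n)).toSphere univ ≤
      ∫⁻ y, ENNReal.ofReal ‖iteratedFDeriv ℝ (k+1) u y‖ *
        ENNReal.ofReal (‖x - y‖ ^ (((k+1 : ℕ) : ℝ) - n)) := by
  have hm : Measurable fun y => ENNReal.ofReal ‖iteratedFDeriv ℝ (k+1) u y‖ *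
        ENNReal.ofReal (‖x - y‖ ^ (((k+1 : ℕ) : ℝ) - n)) := by
    have : Continuous (iteratedFDeriv ℝ (k+1) u) :=
      hu.continuous_iteratedFDeriv (by exact_mod_cast le_top)
    have := this.norm.measurable
    fun_prop
  rw [← lintegral_add_left_eq_self _ x, aux_polar hn _ (by exact hm.comp (measurable_const_add x))]
  rw [← lintegral_const]
  refine lintegral_mono fun θ => ?_
  obtain ⟨R, hR⟩ := hc.isCompact.isBounded.exists_norm_le
  have hw : ContDiff ℝ (⊤ : ℕ∞) (fun t : ℝ => u (x + t • (θ : Euc n))) := by fun_prop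
  have hθ : ‖(θ : Euc n)‖ = 1 := by simp
  have := aux_oneD (k := k) hw (T := max R 0 + ‖x‖) (by positivity) (by
    intro t ht
    by_contra hne
    have h1 := hR _ (subset_tsupport _ hne)
    have ht0 : 0 < t := lt_of_le_of_lt (by positivity) ht
    have h2 : ‖t • (θ : Euc n)‖ = t := by rw [norm_smul, hθ, mul_one, Real.norm_of_nonneg ht0.le]
    have h3 := norm_sub_le (x + t • (θ : Euc n)) x
    rw [add_sub_cancel_left, h2] at h3
    have := le_max_left R 0
    linarith)
  simp only [zero_smul, add_zero] at this
  refine this.trans (setLIntegral_mono' measurableSet_Ioi fun t ht => ?_)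
  have ht : 0 < t := ht
  have h2 : ‖x - (x + t • (θ : Euc n))‖ = t := by
    rw [sub_add_cancel_left, norm_neg, norm_smul, hθ, mul_one, Real.norm_of_nonneg ht.le]
  rw [h2, mul_left_comm, ← ENNReal.ofReal_mul (p := t ^ (n - 1)) (by positivity), mul_comm]
  have h4 : t ^ (n - 1) * t ^ (((k+1 : ℕ) : ℝ) - n) = t ^ k := by
    rw [← Real.rpow_natCast, ← Real.rpow_add ht, ← Real.rpow_natCast]
    congr 1
    rw [Nat.cast_sub hn]; push_cast; ring
  rw [h4]
  gcongr
  rw [aux_line u hu, ← Real.norm_eq_abs]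
  refine (ContinuousMultilinearMap.le_opNorm _ _).trans ?_
  simp [hθ]

theorem aux_listDeriv_contDiff {n : ℕ} (l : List (Fin n)) {u : Euc n → ℝ}
    (hu : ContDiff ℝ (⊤ : ℕ∞) u) : ContDiff ℝ (⊤ : ℕ∞) (listDeriv l u) := by
  induction l with
  | nil => exact hu
  | cons i l ih =>
    have := ih.fderiv_right (m := (⊤ : ℕ∞)) (by simp)
    exact this.clm_apply contDiff_const

theorem aux_listDeriv_compact {n : ℕ} (l : List (Fin n)) {u : Euc n → ℝ}
    (hu : HasCompactSupport u) : HasCompactSupport (listDeriv l u) := by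
  induction l with
  | nil => exact hu
  | cons i l ih => exact ih.fderiv_apply (𝕜 := ℝ) _

theorem aux_listDeriv_perm {n : ℕ} {l l' : List (Fin n)} (h : l.Perm l') {u : Euc n → ℝ}
    (hu : ContDiff ℝ (⊤ : ℕ∞) u) : listDeriv l u = listDeriv l' u := by
  induction h with
  | nil => rfl
  | cons i _ ih => simp only [listDeriv, ih]
  | trans _ _ ih1 ih2 => exact ih1.trans ih2
  | swap i j l =>
    have hv := aux_listDeriv_contDiff l hu
    generalize listDeriv l u = v at *
    ext x
    have hd : DifferentiableAt ℝ (fderiv ℝ (listDeriv l u)) x :=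
      ((aux_listDeriv_contDiff l hu).fderiv_right (m := (⊤ : ℕ∞)) (by simp)).differentiable
        (by simp) x
    have hs : IsSymmSndFDerivAt ℝ (listDeriv l u) x :=
      (aux_listDeriv_contDiff l hu).contDiffAt.isSymmSndFDerivAt (by simp only [minSmoothness_of_isRCLikeNormedField]; exact WithTop.coe_le_coe.2 (le_top : (2 : ℕ∞) ≤ ⊤))
    have key : ∀ i j : Fin n, listDeriv (j :: i :: l) u x =
        fderiv ℝ (fderiv ℝ (listDeriv l u)) x (EuclideanSpace.single j 1) (EuclideanSpace.single i 1) := by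
      intro i j
      simp only [listDeriv]
      rw [fderiv_clm_apply hd (differentiableAt_const _)]
      simp
    rw [key, key]
    exact hs _ _

theorem aux_listDeriv_iter {n : ℕ} {u : Euc n → ℝ} (hu : ContDiff ℝ (⊤ : ℕ∞) u) (j : ℕ)
    (r : Fin j → Fin n) (x : Euc n) :
    iteratedFDeriv ℝ j u x (fun a => EuclideanSpace.single (r a) 1) =
      listDeriv (List.ofFn r) u x := by
  induction j generalizing x with
  | zero => simp [listDeriv]
  | succ j ih =>
    rw [List.ofFn_succ, iteratedFDeriv_succ_apply_left]
    simp only [listDeriv]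
    have hd : DifferentiableAt ℝ (iteratedFDeriv ℝ j u) x :=
      (hu.differentiable_iteratedFDeriv (by exact_mod_cast WithTop.coe_lt_top j)) _
    have := (hd.hasFDerivAt.continuousMultilinear_apply_const
      (fun a : Fin j => EuclideanSpace.single (r a.succ) (1:ℝ))).fderiv
    have h2 : (fun y => (iteratedFDeriv ℝ j u y) (fun a : Fin j => EuclideanSpace.single (r a.succ) (1:ℝ)))
      = listDeriv (List.ofFn fun i => r i.succ) u := funext fun y => ih (fun a => r a.succ) y
    rw [h2] at this
    rw [this]
    rfl

/-- canonical list -/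
def auxCanon {n : ℕ} (α : Fin n → ℕ) : List (Fin n) :=
  (List.finRange n).flatMap fun i => List.replicate (α i) i

theorem aux_canon_count {n : ℕ} (α : Fin n → ℕ) (i : Fin n) : (auxCanon α).count i = α i := by
  unfold auxCanon
  rw [List.count_flatMap]
  simp only [Function.comp_def, List.count_replicate]
  have : (List.map (fun x => if (x == i) = true then α x else 0) (List.finRange n)).sum
    = ∑ x : Fin n, if (x == i) = true then α x else 0 := by
    rw [Fin.sum_univ_def]
  rw [this]
  simp

theorem aux_canon_perm {n : ℕ} (l : List (Fin n)) : l.Perm (auxCanon fun i => l.count i) := by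
  rw [List.perm_iff_count]
  intro i
  rw [aux_canon_count]

theorem aux_canon_length {n : ℕ} (α : Fin n → ℕ) : (auxCanon α).length = mdeg α := by
  unfold auxCanon mdeg
  rw [List.length_flatMap, Fin.sum_univ_def]
  simp

theorem aux_opNorm {n j : ℕ} (A : ContinuousMultilinearMap ℝ (fun _ : Fin j => Euc n) ℝ) :
    ‖A‖ ≤ ∑ r : Fin j → Fin n, |A (fun a => EuclideanSpace.single (r a) 1)| := by
  refine A.opNorm_le_bound (by positivity) fun v => ?_
  have hv : v = fun a => ∑ i : Fin n, v a i • EuclideanSpace.single i (1:ℝ) := by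
    funext a
    ext b
    simp [Finset.sum_apply, Pi.single_apply]
  conv_lhs => rw [hv]
  rw [A.map_sum]
  refine (norm_sum_le _ _).trans ?_
  rw [Finset.sum_mul]
  refine Finset.sum_le_sum fun r _ => ?_
  rw [A.map_smul_univ, norm_smul, mul_comm, Real.norm_eq_abs, norm_prod]
  gcongr with a
  exact PiLp.norm_apply_le _ _

/-- sum of derivatives -/
theorem aux_iter_le {n k : ℕ} {u : Euc n → ℝ} (hu : ContDiff ℝ (⊤ : ℕ∞) u) {j : ℕ} (hj : j ≤ k)
    (x : Euc n) :
    ‖iteratedFDeriv ℝ j u x‖ ≤ (n ^ j : ℕ) * ∑ β : Fin n → Fin (k + 1),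
      if mdeg (fun i => (β i : ℕ)) ≤ k then |mderiv (fun i => (β i : ℕ)) u x| else 0 := by
  refine (aux_opNorm _).trans ?_
  have : ∀ r : Fin j → Fin n, |iteratedFDeriv ℝ j u x (fun a => EuclideanSpace.single (r a) 1)| ≤
      ∑ β : Fin n → Fin (k + 1),
      if mdeg (fun i => (β i : ℕ)) ≤ k then |mderiv (fun i => (β i : ℕ)) u x| else 0 := by
    intro r
    rw [aux_listDeriv_iter hu, aux_listDeriv_perm (aux_canon_perm _) hu]
    have hlen : mdeg (fun i => (List.ofFn r).count i) = j := by
      rw [← aux_canon_length, ← (aux_canon_perm _).length_eq, List.length_ofFn]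
    let β : Fin n → Fin (k + 1) := fun i => ⟨(List.ofFn r).count i, by
      have := List.count_le_length (a := i) (l := List.ofFn r)
      rw [List.length_ofFn] at this
      omega⟩
    refine le_trans ?_ (Finset.single_le_sum (f := fun β : Fin n → Fin (k + 1) =>
      if mdeg (fun i => (β i : ℕ)) ≤ k then |mderiv (fun i => (β i : ℕ)) u x| else 0)
      (fun β _ => by split_ifs <;> positivity) (Finset.mem_univ β))
    have : mdeg (fun i => (β i : ℕ)) ≤ k := by rw [← hlen] at hj; exact hj
    simp only [this, if_true]
    exact le_rfl
  refine (Finset.sum_le_sum fun r _ => this r).trans ?_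
  simp

theorem aux_listDeriv_reflect {n : ℕ} (l : List (Fin n)) {u : Euc n → ℝ}
    (hu : ContDiff ℝ (⊤ : ℕ∞) u) (x : Euc n) :
    listDeriv l (fun y => u (x - y)) = fun y => (-1 : ℝ) ^ l.length * listDeriv l u (x - y) := by
  induction l with
  | nil => simp [listDeriv]
  | cons i l ih =>
    funext y
    simp only [listDeriv, ih, List.length_cons]
    have h := congrFun (fderiv_const_smul_field (𝕜 := ℝ) (f := fun y => listDeriv l u (x - y)) ((-1 : ℝ) ^ l.length)) y
    simp only [Pi.smul_def, smul_eq_mul] at h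
    have h2 : fderiv ℝ (fun y => listDeriv l u (x - y)) y = - fderiv ℝ (listDeriv l u) (x - y) := by
      have hd := ((aux_listDeriv_contDiff l hu).differentiable (by simp) (x - y)).hasFDerivAt
      have h3 : HasFDerivAt (fun y : Euc n => x - y) (-ContinuousLinearMap.id ℝ (Euc n)) y :=
        (hasFDerivAt_id y).const_sub x
      have h4 := (hd.comp y h3).fderiv
      simp only [Function.comp_def] at h4
      rw [h4]
      ext v
      simp
    rw [h, h2]
    simp [pow_succ]

theorem aux_listDeriv_conv {n : ℕ} (l : List (Fin n)) {φ f : Euc n → ℝ}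
    (hφ : ContDiff ℝ (⊤ : ℕ∞) φ) (hc : HasCompactSupport φ) (hf : LocallyIntegrable f) :
    listDeriv l (fun x => ∫ y, φ (x - y) * f y) = fun x => ∫ y, listDeriv l φ (x - y) * f y := by
  induction l with
  | nil => simp [listDeriv]
  | cons i l ih =>
    funext x
    simp only [listDeriv, ih]
    have h1 := aux_listDeriv_contDiff l hφ
    have h2 := aux_listDeriv_compact l hc
    generalize listDeriv l φ = ψ at *
    have := h2.hasFDerivAt_convolution_right (μ := volume) (ContinuousLinearMap.mul ℝ ℝ).flip hf
      (h1.of_le (by exact_mod_cast le_top)) x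
    have h3 : (fun x => ∫ y, ψ (x - y) * f y) =
      convolution f ψ (ContinuousLinearMap.mul ℝ ℝ).flip volume := by
      funext x; simp [convolution, mul_comm]
    rw [h3, this.fderiv]
    rw [convolution_precompR_apply _ hf (h2.fderiv ℝ) (h1.continuous_fderiv (by simp))]
    simp [convolution, mul_comm]

theorem aux_J {n k : ℕ} (hk : 0 < k) (hkn : k < n) {R : ℝ} (hR : 0 < R) :
    ∫⁻ z in ball (0 : Euc n) R, ENNReal.ofReal (‖z‖ ^ ((k : ℝ) - n)) ≤
      (volume : Measure (Euc n)).toSphere univ * ENNReal.ofReal (R ^ k) := by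
  rw [← lintegral_indicator measurableSet_ball, aux_polar (by omega) _
    (Measurable.indicator (by fun_prop) measurableSet_ball), mul_comm, ← lintegral_const]
  refine lintegral_mono fun θ => ?_
  have hθ : ‖(θ : Euc n)‖ = 1 := by simp
  calc _ ≤ ∫⁻ t in Ioi (0:ℝ), (Iio R).indicator (fun _ => ENNReal.ofReal (R ^ (k - 1))) t := by
        refine setLIntegral_mono' measurableSet_Ioi fun t ht => ?_
        have ht : 0 < t := ht
        have h2 : ‖t • (θ : Euc n)‖ = t := by
          rw [norm_smul, hθ, mul_one, Real.norm_of_nonneg ht.le]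
        by_cases htR : t < R
        · rw [indicator_of_mem (by simpa [h2] using htR), indicator_of_mem (by exact htR), h2,
            ← ENNReal.ofReal_mul (by positivity)]
          apply ENNReal.ofReal_le_ofReal
          have h4 : t ^ (n - 1) * t ^ ((k : ℝ) - n) = t ^ (k - 1) := by
            rw [← Real.rpow_natCast, ← Real.rpow_add ht, ← Real.rpow_natCast]
            congr 1
            rw [Nat.cast_sub (by omega), Nat.cast_sub (by omega)]; push_cast; ring
          rw [h4]
          gcongr
        · rw [indicator_of_notMem (by simpa [h2] using htR)]
          simp
    _ = ENNReal.ofReal (R ^ k) := by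
        rw [lintegral_indicator measurableSet_Iio, lintegral_const, restrict_apply_univ,
          Measure.restrict_apply measurableSet_Iio, Iio_inter_Ioi, Real.volume_Ioo, sub_zero,
          ← ENNReal.ofReal_mul (by positivity), ← pow_succ, Nat.sub_add_cancel hk]

theorem aux_A1 {n k : ℕ} (hk : 0 < k) (hkn : k < n) : ∃ A : ℝ≥0∞, A ≠ ⊤ ∧
    ∀ (x y : Euc n) (r : ℝ), 0 < r → x ≠ y →
      ∫⁻ z in ball x r, ENNReal.ofReal (‖z - y‖ ^ ((k : ℝ) - n)) ≤
        A * volume (ball x r) * ENNReal.ofReal (‖x - y‖ ^ ((k : ℝ) - n)) := by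
  have : NeZero n := ⟨by omega⟩
  set σ := (volume : Measure (Euc n)).toSphere univ with hσ
  set V := (volume (ball (0 : Euc n) 1)) with hV
  have hV0 : V ≠ 0 := (measure_ball_pos _ _ one_pos).ne'
  have hVt : V ≠ ⊤ := measure_ball_lt_top.ne
  have hσt : σ ≠ ⊤ := measure_ne_top _ _
  have hneg : (k : ℝ) - n ≤ 0 := by
    have : (k : ℝ) < n := by exact_mod_cast hkn
    linarith
  set c := ENNReal.ofReal ((1/2 : ℝ) ^ ((k : ℝ) - n)) with hc
  refine ⟨σ * ENNReal.ofReal (3 ^ k) * V⁻¹ * c + c, ?_, ?_⟩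
  · have := ENNReal.inv_ne_top.2 hV0
    finiteness
  intro x y r hr hxy
  have hd : 0 < ‖x - y‖ := norm_pos_iff.2 (sub_ne_zero.2 hxy)
  have hhalf : ENNReal.ofReal ((‖x - y‖ / 2) ^ ((k : ℝ) - n)) =
      c * ENNReal.ofReal (‖x - y‖ ^ ((k : ℝ) - n)) := by
    rw [hc, ← ENNReal.ofReal_mul (by positivity), ← Real.mul_rpow (by positivity) (by positivity)]
    congr 2; ring
  rcases lt_or_ge ‖x - y‖ (2 * r) with h | h
  · have hsub : ball x r ⊆ ball y (3 * r) := by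
      intro z hz
      rw [mem_ball, dist_eq_norm] at *
      have := norm_add_le (z - x) (x - y)
      rw [sub_add_sub_cancel] at this
      linarith
    calc _ ≤ ∫⁻ z in ball y (3 * r), ENNReal.ofReal (‖z - y‖ ^ ((k : ℝ) - n)) :=
          lintegral_mono_set hsub
      _ = ∫⁻ z in ball (0 : Euc n) (3 * r), ENNReal.ofReal (‖z‖ ^ ((k : ℝ) - n)) := by
          rw [← lintegral_indicator measurableSet_ball, ← lintegral_indicator measurableSet_ball,
            ← lintegral_sub_right_eq_self ((ball (0 : Euc n) (3 * r)).indicator _) y]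
          refine lintegral_congr fun z => ?_
          simp only [indicator, mem_ball, dist_eq_norm, sub_zero]
      _ ≤ σ * ENNReal.ofReal ((3 * r) ^ k) := aux_J hk hkn (by positivity)
      _ = σ * ENNReal.ofReal (3 ^ k) * V⁻¹ * (ENNReal.ofReal (r ^ n) * V) *
            ENNReal.ofReal (r ^ ((k : ℝ) - n)) := by
          have e : (3 * r) ^ k = 3 ^ k * (r ^ n * r ^ ((k : ℝ) - n)) := by
            rw [mul_pow, ← Real.rpow_natCast r n, ← Real.rpow_add hr, ← Real.rpow_natCast r k]
            congr 2; ring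
          rw [e, ENNReal.ofReal_mul (by positivity), ENNReal.ofReal_mul (by positivity)]
          calc _ = σ * ENNReal.ofReal (3 ^ k) * (V⁻¹ * V) * ENNReal.ofReal (r ^ n) *
                ENNReal.ofReal (r ^ ((k : ℝ) - n)) := by
                rw [ENNReal.inv_mul_cancel hV0 hVt]; ring
            _ = _ := by ring
      _ ≤ σ * ENNReal.ofReal (3 ^ k) * V⁻¹ * (ENNReal.ofReal (r ^ n) * V) *
            ENNReal.ofReal ((‖x - y‖ / 2) ^ ((k : ℝ) - n)) := by
          gcongr 1
          apply ENNReal.ofReal_le_ofReal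
          exact Real.rpow_le_rpow_of_nonpos (by positivity) (by linarith) hneg
      _ = (σ * ENNReal.ofReal (3 ^ k) * V⁻¹ * c) * volume (ball x r) *
            ENNReal.ofReal (‖x - y‖ ^ ((k : ℝ) - n)) := by
          rw [hhalf, addHaar_ball _ _ hr.le]
          simp only [finrank_euclideanSpace, Fintype.card_fin]
          ring
      _ ≤ _ := by gcongr; exact le_self_add
  · calc _ ≤ ∫⁻ z in ball x r, ENNReal.ofReal ((‖x - y‖ / 2) ^ ((k : ℝ) - n)) := by
          refine setLIntegral_mono' measurableSet_ball fun z hz => ?_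
          apply ENNReal.ofReal_le_ofReal
          refine Real.rpow_le_rpow_of_nonpos (by positivity) ?_ hneg
          rw [mem_ball', dist_eq_norm] at hz
          have := norm_add_le (x - z) (z - y)
          rw [sub_add_sub_cancel] at this
          linarith
      _ = c * volume (ball x r) * ENNReal.ofReal (‖x - y‖ ^ ((k : ℝ) - n)) := by
          rw [lintegral_const, restrict_apply_univ, hhalf]; ring
      _ ≤ _ := by gcongr; exact le_add_self

/-- potential -/
noncomputable def auxK {n : ℕ} (k : ℕ) (g : Euc n → ℝ≥0∞) (x : Euc n) : ℝ≥0∞ :=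
  ∫⁻ y, g y * ENNReal.ofReal (‖x - y‖ ^ ((k : ℝ) - n))

theorem aux_maxK {n k : ℕ} (hn : 0 < n) {A : ℝ≥0∞}
    (hA : ∀ (x y : Euc n) (r : ℝ), 0 < r → x ≠ y →
      ∫⁻ z in ball x r, ENNReal.ofReal (‖z - y‖ ^ ((k : ℝ) - n)) ≤
        A * volume (ball x r) * ENNReal.ofReal (‖x - y‖ ^ ((k : ℝ) - n)))
    {g : Euc n → ℝ≥0∞} (hg : AEMeasurable g) (x : Euc n) {r : ℝ} (hr : 0 < r) :
    ∫⁻ z in ball x r, auxK k g z ≤ A * volume (ball x r) * auxK k g x := by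
  have : NeZero n := ⟨by omega⟩
  unfold auxK
  rw [lintegral_lintegral_swap]
  · have hgK : AEMeasurable (fun y => g y * ENNReal.ofReal (‖x - y‖ ^ ((k : ℝ) - n))) := by fun_prop
    rw [← lintegral_const_mul'' _ hgK]
    refine lintegral_mono_ae ?_
    filter_upwards [volume.ae_ne x] with y hy
    rw [lintegral_const_mul _ (by fun_prop)]
    refine (mul_le_mul_right (hA x y r hr (Ne.symm hy)) _).trans (le_of_eq (by ring))
  · refine AEMeasurable.mul ?_ (Measurable.aemeasurable (by fun_prop))
    exact hg.comp_quasiMeasurePreserving quasiMeasurePreserving_snd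

theorem aux_mollK {n k : ℕ} (hn : 0 < n) {A : ℝ≥0∞}
    (hA : ∀ (x y : Euc n) (r : ℝ), 0 < r → x ≠ y →
      ∫⁻ z in ball x r, ENNReal.ofReal (‖z - y‖ ^ ((k : ℝ) - n)) ≤
        A * volume (ball x r) * ENNReal.ofReal (‖x - y‖ ^ ((k : ℝ) - n)))
    {g : Euc n → ℝ≥0∞} (hg : AEMeasurable g) (x : Euc n) (φ : ContDiffBump (0 : Euc n))
    (hφ : φ.rOut ≤ 2 * φ.rIn) :
    auxK k (fun y => ∫⁻ z, ENNReal.ofReal (φ.normed volume (y - z)) * g z) x ≤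
      ENNReal.ofReal (2 ^ n) * A * auxK k g x := by
  have : NeZero n := ⟨by omega⟩
  have hcφ : Continuous (φ.normed volume) := φ.continuous_normed
  have hmφ : Measurable (φ.normed volume) := hcφ.measurable
  unfold auxK
  have h1 : ∀ y, (∫⁻ z, ENNReal.ofReal (φ.normed volume (y - z)) * g z) *
      ENNReal.ofReal (‖x - y‖ ^ ((k : ℝ) - n)) =
      ∫⁻ z, ENNReal.ofReal (φ.normed volume (y - z)) * g z *
        ENNReal.ofReal (‖x - y‖ ^ ((k : ℝ) - n)) := fun y => by
    have : AEMeasurable (fun z => ENNReal.ofReal (φ.normed volume (y - z)) * g z) := by fun_prop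
    rw [lintegral_mul_const'' _ this]
  simp_rw [h1]
  rw [lintegral_lintegral_swap]
  · have hgK : AEMeasurable (fun y => g y * ENNReal.ofReal (‖x - y‖ ^ ((k : ℝ) - n))) := by fun_prop
    rw [← lintegral_const_mul'' _ hgK]
    refine lintegral_mono_ae ?_
    filter_upwards [volume.ae_ne x] with z hz
    have hr := φ.rOut_pos
    calc _ ≤ ∫⁻ y in ball z φ.rOut, (ENNReal.ofReal (2 ^ n) * (volume (ball z φ.rOut))⁻¹ * g z) *
            ENNReal.ofReal (‖y - x‖ ^ ((k : ℝ) - n)) := by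
          rw [← lintegral_indicator measurableSet_ball]
          refine lintegral_mono fun y => ?_
          by_cases hy : y ∈ ball z φ.rOut
          · rw [indicator_of_mem hy, norm_sub_rev y x]
            gcongr
            refine (ENNReal.ofReal_le_ofReal (φ.normed_le_div_measure_closedBall_rOut volume 2 hφ _)).trans ?_
            have hv : volume (closedBall (0 : Euc n) φ.rOut) = volume (ball z φ.rOut) := by
              rw [addHaar_closedBall _ _ hr.le, addHaar_ball _ _ hr.le]
            have hp : 0 < volume.real (closedBall (0 : Euc n) φ.rOut) :=
              ENNReal.toReal_pos (measure_closedBall_pos _ _ hr).ne' measure_closedBall_lt_top.ne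
            rw [ENNReal.ofReal_div_of_pos hp, measureReal_def,
              ENNReal.ofReal_toReal measure_closedBall_lt_top.ne, hv, div_eq_mul_inv]
            simp
          · have : φ.normed volume (y - z) = 0 := by
              rw [← Function.notMem_support, φ.support_normed_eq]
              simpa [dist_eq_norm] using hy
            simp [this]
      _ = (ENNReal.ofReal (2 ^ n) * (volume (ball z φ.rOut))⁻¹ * g z) *
            ∫⁻ y in ball z φ.rOut, ENNReal.ofReal (‖y - x‖ ^ ((k : ℝ) - n)) := by
          rw [lintegral_const_mul _ (by fun_prop)]
      _ ≤ (ENNReal.ofReal (2 ^ n) * (volume (ball z φ.rOut))⁻¹ * g z) *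
            (A * volume (ball z φ.rOut) * ENNReal.ofReal (‖z - x‖ ^ ((k : ℝ) - n))) := by
          gcongr
          exact hA z x _ hr hz
      _ = ((volume (ball z φ.rOut))⁻¹ * volume (ball z φ.rOut)) * (ENNReal.ofReal (2 ^ n) * A *
            (g z * ENNReal.ofReal (‖x - z‖ ^ ((k : ℝ) - n)))) := by
          rw [norm_sub_rev z x]; ring
      _ = _ := by
          rw [ENNReal.inv_mul_cancel (measure_ball_pos _ _ hr).ne' measure_ball_lt_top.ne, one_mul]
  · refine AEMeasurable.mul (AEMeasurable.mul ?_ ?_) (Measurable.aemeasurable (by fun_prop))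
    · apply Measurable.aemeasurable; fun_prop
    · exact hg.comp_quasiMeasurePreserving quasiMeasurePreserving_snd

theorem aux_smooth {n k : ℕ} (hk : 0 < k) (hkn : k < n) : ∃ C : ℝ≥0∞, C ≠ ⊤ ∧
    ∀ (f : Euc n → ℝ), ContDiff ℝ (⊤ : ℕ∞) f → ∀ x,
      ENNReal.ofReal |f x| ≤ C * auxK k (fun y => ∑ β : Fin n → Fin (k + 1),
        if mdeg (fun i => (β i : ℕ)) ≤ k then
          ENNReal.ofReal |mderiv (fun i => (β i : ℕ)) f y| else 0) x := by
  have hn : 0 < n := by omega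
  have : NeZero n := ⟨by omega⟩
  set σ := (volume : Measure (Euc n)).toSphere univ with hσ
  have hσt : σ ≠ ⊤ := measure_ne_top _ _
  have hσ0 : σ ≠ 0 := by
    rw [hσ, Ne, measure_univ_eq_zero]
    exact toSphere_ne_zero _
  let χ : ContDiffBump (0 : Euc n) := default
  have hχ : ContDiff ℝ (⊤ : ℕ∞) χ := χ.contDiff
  have hχc : HasCompactSupport χ := χ.hasCompactSupport
  have hB : ∀ i : ℕ, ∃ B : ℝ, ∀ z, ‖iteratedFDeriv ℝ i χ z‖ ≤ B := fun i =>
    (hχc.iteratedFDeriv i).exists_bound_of_continuous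
      (hχ.continuous_iteratedFDeriv (by exact_mod_cast le_top))
  choose B hB using hB
  have hB0 : ∀ i, 0 ≤ B i := fun i => (norm_nonneg _).trans (hB i 0)
  set C0 : ℝ := ∑ i ∈ Finset.range (k + 1), (k.choose i : ℝ) * B i * (n ^ (k - i) : ℕ) with hC0
  have hC00 : 0 ≤ C0 := Finset.sum_nonneg fun i _ => by have := hB0 i; positivity
  refine ⟨σ⁻¹ * ENNReal.ofReal C0, ?_, ?_⟩
  · have := ENNReal.inv_ne_top.2 hσ0
    finiteness
  intro f hf x
  set S : Euc n → ℝ := fun y => ∑ β : Fin n → Fin (k + 1),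
      if mdeg (fun i => (β i : ℕ)) ≤ k then |mderiv (fun i => (β i : ℕ)) f y| else 0 with hS
  have hχx : ContDiff ℝ (⊤ : ℕ∞) (fun y => χ (y - x)) := hχ.comp (contDiff_id.sub contDiff_const)
  set u : Euc n → ℝ := fun y => χ (y - x) * f y with hu
  have huc : ContDiff ℝ (⊤ : ℕ∞) u := hχx.mul hf
  have hcomp : HasCompactSupport u := by
    apply HasCompactSupport.mul_right
    exact hχc.comp_homeomorph (Homeomorph.subRight x)
  have hux : u x = f x := by
    simp only [hu, sub_self]
    rw [χ.one_of_mem_closedBall (by simp [χ.rIn_pos.le]), one_mul]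
  have hbound : ∀ y, ‖iteratedFDeriv ℝ k u y‖ ≤ C0 * S y := by
    intro y
    refine (norm_iteratedFDeriv_mul_le (N := (⊤ : ℕ∞)) hχx hf y (by exact_mod_cast le_top)).trans ?_
    rw [hC0, Finset.sum_mul]
    refine Finset.sum_le_sum fun i _ => ?_
    rw [mul_assoc (_ * _) (_ : ℝ) (S y)]
    have h1 : ‖iteratedFDeriv ℝ i (fun y => χ (y - x)) y‖ ≤ B i := by
      rw [iteratedFDeriv_comp_sub]; exact hB i _
    have h2 := aux_iter_le hf (show k - i ≤ k by omega) y
    have := hB0 i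
    gcongr
  have hrep := aux_rep (k := k - 1) hn u huc hcomp x
  rw [hux, Nat.sub_add_cancel hk] at hrep
  have hS' : ∀ y, (∑ β : Fin n → Fin (k + 1),
        if mdeg (fun i => (β i : ℕ)) ≤ k then
          ENNReal.ofReal |mderiv (fun i => (β i : ℕ)) f y| else 0) = ENNReal.ofReal (S y) := by
    intro y
    rw [hS, ENNReal.ofReal_sum_of_nonneg]
    · refine Finset.sum_congr rfl fun β _ => ?_
      split_ifs <;> simp
    · intro β _; split_ifs <;> positivity
  simp_rw [hS']
  have h3 : ENNReal.ofReal |f x| * σ ≤ ENNReal.ofReal C0 * auxK k (fun y => ENNReal.ofReal (S y)) x := by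
    refine hrep.trans ?_
    unfold auxK
    rw [← lintegral_const_mul' _ _ ENNReal.ofReal_ne_top]
    refine lintegral_mono fun y => ?_
    dsimp only
    rw [← mul_assoc, ← ENNReal.ofReal_mul hC00]
    gcongr
    exact hbound y
  calc ENNReal.ofReal |f x| = σ⁻¹ * (ENNReal.ofReal |f x| * σ) := by
        rw [mul_comm _ σ, ← mul_assoc, ENNReal.inv_mul_cancel hσ0 hσt, one_mul]
    _ ≤ σ⁻¹ * (ENNReal.ofReal C0 * auxK k (fun y => ENNReal.ofReal (S y)) x) := by gcongr
    _ = _ := by ring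

theorem aux_K_sum {n k : ℕ} {ι : Type*} (s : Finset ι) {g : ι → Euc n → ℝ≥0∞}
    (hg : ∀ i, AEMeasurable (g i)) (x : Euc n) :
    auxK k (fun y => ∑ i ∈ s, g i y) x = ∑ i ∈ s, auxK k (g i) x := by
  unfold auxK
  simp_rw [Finset.sum_mul]
  rw [lintegral_finsetSum' _ (fun i _ => by have := hg i; fun_prop)]

theorem aux_K_mono {n k : ℕ} {g h : Euc n → ℝ≥0∞} (hgh : ∀ y, g y ≤ h y) (x : Euc n) :
    auxK k g x ≤ auxK k h x := by
  unfold auxK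
  exact lintegral_mono fun y => mul_le_mul_left (hgh y) _

theorem aux_moll_deriv {n : ℕ} {α : Fin n → ℕ} {f g : Euc n → ℝ} (hf : LocallyIntegrable f)
    (hw : IsWeakDeriv α f g) (φ : ContDiffBump (0 : Euc n)) (x : Euc n) :
    mderiv α (fun x => ∫ y, φ.normed volume (x - y) * f y) x =
      ∫ y, φ.normed volume (x - y) * g y := by
  have hφ : ContDiff ℝ (⊤ : ℕ∞) (φ.normed volume) := φ.contDiff_normed
  have hc : HasCompactSupport (φ.normed volume) := φ.hasCompactSupport_normed
  have h := hw (fun y => φ.normed volume (x - y)) (by fun_prop)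
    (hc.comp_homeomorph (Homeomorph.subLeft x))
  have h1 : mderiv α (fun y => φ.normed volume (x - y)) =
      fun y => (-1 : ℝ) ^ mdeg α * mderiv α (φ.normed volume) (x - y) := by
    have := aux_listDeriv_reflect (auxCanon α) hφ x
    rw [aux_canon_length] at this
    exact this
  have h2 : mderiv α (fun x => ∫ y, φ.normed volume (x - y) * f y) x =
      ∫ y, mderiv α (φ.normed volume) (x - y) * f y :=
    congrFun (aux_listDeriv_conv (auxCanon α) hφ hc hf) x
  rw [h1] at h
  have h3 : ∀ y, f y * ((-1 : ℝ) ^ mdeg α * mderiv α (φ.normed volume) (x - y)) =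
    (-1 : ℝ) ^ mdeg α * (mderiv α (φ.normed volume) (x - y) * f y) := fun y => by ring
  simp_rw [h3] at h
  rw [integral_const_mul] at h
  have h4 := mul_left_cancel₀ (pow_ne_zero _ (by norm_num)) h
  rw [h2, h4]
  simp_rw [mul_comm]

theorem aux_sobolev {n k : ℕ} {p : ℝ} (hk : 0 < k) (hkn : k < n) (hp : 1 ≤ p) :
    ∃ C : ℝ≥0∞, C ≠ ⊤ ∧ ∀ (f : Euc n → ℝ) (D : (Fin n → ℕ) → Euc n → ℝ), D 0 = f →
      (∀ α : Fin n → ℕ, mdeg α ≤ k → MemLp (D α) (ENNReal.ofReal p) volume ∧ IsWeakDeriv α f (D α)) →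
      ∀ᵐ x, ENNReal.ofReal |f x| ≤ C * auxK k (fun y => ∑ β : Fin n → Fin (k + 1),
        if mdeg (fun i => (β i : ℕ)) ≤ k then
          ENNReal.ofReal |D (fun i => (β i : ℕ)) y| else 0) x := by
  have hn : 0 < n := by omega
  obtain ⟨A, hAt, hA⟩ := aux_A1 hk hkn
  obtain ⟨C, hCt, hC⟩ := aux_smooth hk hkn
  refine ⟨C * (ENNReal.ofReal (2 ^ n) * A), by finiteness, ?_⟩
  intro f D hD0 hD
  have hp1 : (1 : ℝ≥0∞) ≤ ENNReal.ofReal p := by simpa using hp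
  have hfL : LocallyIntegrable f := by
    have := (hD 0 (by simp [mdeg])).1
    rw [hD0] at this
    exact this.locallyIntegrable hp1
  let φ : ℕ → ContDiffBump (0 : Euc n) := fun j =>
    ⟨1 / ((j : ℝ) + 1), 2 * (1 / ((j : ℝ) + 1)), by positivity, by
      have : 0 < 1 / ((j : ℝ) + 1) := by positivity
      linarith⟩
  have hφ0 : Tendsto (fun j => (φ j).rOut) atTop (𝓝 0) := by
    have := (tendsto_one_div_add_atTop_nhds_zero_nat (𝕜 := ℝ)).const_mul 2
    simpa [φ] using this
  have hae := ContDiffBump.ae_convolution_tendsto_right_of_locallyIntegrable (μ := volume)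
    (φ := φ) (K := 2) hφ0 (Eventually.of_forall fun j => le_rfl) hfL
  filter_upwards [hae] with x hx
  have hconv : ∀ j x, convolution ((φ j).normed volume) f (ContinuousLinearMap.lsmul ℝ ℝ) volume x =
      ∫ y, (φ j).normed volume (x - y) * f y := by
    intro j x
    rw [convolution_eq_swap]
    simp
  have hlim : Tendsto (fun j => ENNReal.ofReal |∫ y, (φ j).normed volume (x - y) * f y|) atTop
      (𝓝 (ENNReal.ofReal |f x|)) := by
    simp_rw [← hconv]
    exact ENNReal.tendsto_ofReal hx.abs
  refine le_of_tendsto' hlim fun j => ?_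
  have hsm : ContDiff ℝ (⊤ : ℕ∞) (fun x => ∫ y, (φ j).normed volume (x - y) * f y) := by
    have := (φ j).hasCompactSupport_normed (μ := volume) |>.contDiff_convolution_left
      (ContinuousLinearMap.lsmul ℝ ℝ) (n := (⊤ : ℕ∞)) ((φ j).contDiff_normed) hfL
    rwa [funext (hconv j)] at this
  refine (hC _ hsm x).trans ?_
  rw [mul_assoc]
  gcongr
  set g : (Fin n → Fin (k+1)) → Euc n → ℝ≥0∞ := fun β y =>
    if mdeg (fun i => (β i : ℕ)) ≤ k then ENNReal.ofReal |D (fun i => (β i : ℕ)) y| else 0 with hg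
  have hgm : ∀ β, AEMeasurable (g β) := by
    intro β
    by_cases hβ : mdeg (fun i => (β i : ℕ)) ≤ k
    · simp only [hg, hβ, if_true]
      have := (hD _ hβ).1.1.aemeasurable
      fun_prop
    · simp [hg, hβ]
  have hmeas2 : Measurable ((φ j).normed volume) := (φ j).continuous_normed.measurable
  have hmm : ∀ β, AEMeasurable (fun y => ∫⁻ z, ENNReal.ofReal ((φ j).normed volume (y - z)) * g β z) := by
    intro β
    apply AEMeasurable.lintegral_prod_right' (f := fun q : Euc n × Euc n =>
      ENNReal.ofReal ((φ j).normed volume (q.1 - q.2)) * g β q.2)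
    refine AEMeasurable.mul (Measurable.aemeasurable (by fun_prop)) ?_
    exact (hgm β).comp_quasiMeasurePreserving quasiMeasurePreserving_snd
  calc _ ≤ auxK k (fun y => ∑ β, ∫⁻ z, ENNReal.ofReal ((φ j).normed volume (y - z)) * g β z) x := by
        refine aux_K_mono (fun y => Finset.sum_le_sum fun β _ => ?_) x
        by_cases hβ : mdeg (fun i => (β i : ℕ)) ≤ k
        · simp only [hg, hβ, if_true]
          rw [aux_moll_deriv hfL (hD _ hβ).2, ← Real.norm_eq_abs, ofReal_norm]
          refine (enorm_integral_le_lintegral_enorm _).trans (le_of_eq ?_)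
          refine lintegral_congr fun z => ?_
          rw [enorm_mul, ← ofReal_norm, ← ofReal_norm, Real.norm_of_nonneg ((φ j).nonneg_normed _),
            Real.norm_eq_abs]
        · simp [hβ]
    _ = ∑ β, auxK k (fun y => ∫⁻ z, ENNReal.ofReal ((φ j).normed volume (y - z)) * g β z) x :=
        aux_K_sum _ hmm x
    _ ≤ ∑ β, ENNReal.ofReal (2 ^ n) * A * auxK k (g β) x :=
        Finset.sum_le_sum fun β _ => aux_mollK hn hA (hgm β) x (φ j) le_rfl
    _ = _ := by rw [← Finset.mul_sum, aux_K_sum _ hgm]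

end AuxLemmas

/-- weak-type capacitary inequality for the maximal function of a
vector-valued Sobolev mapping. -/
theorem rieszCap_maximal_weak_type_vector {n k m : ℕ} {p : ℝ}
    (hk : 0 < k) (hp : 1 ≤ p) (hkpn : (k : ℝ) * p < n) :
    ∃ C : ℝ, 0 < C ∧
      ∀ (Fs : Fin m → Euc n → ℝ) (DF : Fin m → (Fin n → ℕ) → Euc n → ℝ),
        (∀ i, DF i 0 = Fs i) →
        (∀ i (α : Fin n → ℕ), mdeg α ≤ k →
          MemLp (DF i α) (ENNReal.ofReal p) volume ∧ IsWeakDeriv α (Fs i) (DF i α)) →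
      ∀ lam : ℝ, 0 < lam →
        rieszCap (k : ℝ) p
          {x : Euc n | ENNReal.ofReal lam <
            maxFn (fun y => ENNReal.ofReal (Real.sqrt (∑ i, Fs i y ^ 2))) x} ≤
        ENNReal.ofReal (C / lam ^ p) *
          ∑ i : Fin m, ∑ β : Fin n → Fin (k + 1),
            if mdeg (fun j => (β j : ℕ)) ≤ k then
              ∫⁻ y, ENNReal.ofReal |DF i (fun j => (β j : ℕ)) y| ^ p
            else 0 := by
  have hp0 : 0 < p := by linarith
  have hkn : k < n := by
    have h1 : (k : ℝ) * 1 ≤ k * p := by gcongr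
    have : (k : ℝ) < n := by linarith
    exact_mod_cast this
  have hn : 0 < n := by omega
  have hγ : 0 < rieszGamma n k := by
    unfold rieszGamma
    have h1 : (0:ℝ) < k := by exact_mod_cast hk
    have h2 : (k:ℝ) < n := by exact_mod_cast hkn
    have h3 := Real.Gamma_pos_of_pos (show (0:ℝ) < k / 2 by positivity)
    have h4 := Real.Gamma_pos_of_pos (show (0:ℝ) < (n - k) / 2 by linarith)
    positivity
  obtain ⟨A, hAt, hA⟩ := aux_A1 hk hkn
  obtain ⟨C, hCt, hC⟩ := aux_sobolev (p := p) hk hkn hp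
  set B : ℝ := (C * A).toReal with hB
  have hB0 : 0 ≤ B := ENNReal.toReal_nonneg
  have hBe : ENNReal.ofReal B = C * A := ENNReal.ofReal_toReal (by finiteness)
  set γ := rieszGamma n k with hγd
  set N : ℕ := (Finset.univ : Finset (Fin m × (Fin n → Fin (k + 1)))).card with hN
  refine ⟨(γ * B) ^ p * (N : ℝ) ^ (p - 1) + 1, by positivity, ?_⟩
  intro Fs DF hDF0 hDF lam hlam
  set G : Fin m × (Fin n → Fin (k + 1)) → Euc n → ℝ := fun q y =>
    if mdeg (fun j => (q.2 j : ℕ)) ≤ k then |DF q.1 (fun j => (q.2 j : ℕ)) y| else 0 with hG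
  have hG0 : ∀ q y, 0 ≤ G q y := fun q y => by simp only [hG]; split_ifs <;> positivity
  have hGL : ∀ q, MemLp (G q) (ENNReal.ofReal p) volume := by
    intro q
    by_cases hq : mdeg (fun j => (q.2 j : ℕ)) ≤ k
    · simp only [hG, hq, if_true]
      exact (hDF q.1 _ hq).1.norm
    · simp only [hG, hq, if_false]
      exact MemLp.zero
  have hGm : ∀ q, AEMeasurable (fun y => ENNReal.ofReal (G q y)) := fun q => by
    have := (hGL q).1.aemeasurable
    fun_prop
  set h : Euc n → ℝ := fun y => ∑ q, G q y with hh
  have hh0 : ∀ y, 0 ≤ h y := fun y => Finset.sum_nonneg fun q _ => hG0 q y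
  have hhL : MemLp h (ENNReal.ofReal p) volume := memLp_finsetSum _ fun q _ => hGL q
  set H : Euc n → ℝ≥0∞ := fun y => ENNReal.ofReal (h y) with hH
  have hHs : ∀ y, H y = ∑ q, ENNReal.ofReal (G q y) := fun y => by
    simp only [hH, hh]
    rw [ENNReal.ofReal_sum_of_nonneg fun q _ => hG0 q y]
  have hHm : AEMeasurable H := by
    have := hhL.1.aemeasurable
    fun_prop
  -- pointwise bound
  have hpt : ∀ᵐ x, ENNReal.ofReal (Real.sqrt (∑ i, Fs i x ^ 2)) ≤ C * auxK k H x := by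
    have hall : ∀ᵐ x, ∀ i, ENNReal.ofReal |Fs i x| ≤ C * auxK k (fun y => ∑ β : Fin n → Fin (k + 1),
        if mdeg (fun j => (β j : ℕ)) ≤ k then
          ENNReal.ofReal |DF i (fun j => (β j : ℕ)) y| else 0) x :=
      ae_all_iff.2 fun i => hC (Fs i) (DF i) (hDF0 i) (hDF i)
    filter_upwards [hall] with x hx
    have hGe : ∀ i β y, (if mdeg (fun j => ((β : Fin n → Fin (k + 1)) j : ℕ)) ≤ k then
          ENNReal.ofReal |DF i (fun j => (β j : ℕ)) y| else 0) = ENNReal.ofReal (G (i, β) y) := by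
      intro i β y
      simp only [hG]
      split_ifs <;> simp
    simp_rw [hGe] at hx
    calc ENNReal.ofReal (Real.sqrt (∑ i, Fs i x ^ 2)) ≤ ENNReal.ofReal (∑ i, |Fs i x|) := by
          apply ENNReal.ofReal_le_ofReal
          apply Real.sqrt_le_iff.2 ⟨Finset.sum_nonneg fun i _ => abs_nonneg _, ?_⟩
          simp_rw [← sq_abs (Fs _ x)]
          exact Finset.sum_sq_le_sq_sum_of_nonneg fun i _ => abs_nonneg _
      _ = ∑ i, ENNReal.ofReal |Fs i x| := ENNReal.ofReal_sum_of_nonneg fun i _ => abs_nonneg _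
      _ ≤ ∑ i, C * auxK k (fun y => ∑ β : Fin n → Fin (k + 1), ENNReal.ofReal (G (i, β) y)) x :=
          Finset.sum_le_sum fun i _ => hx i
      _ = C * auxK k H x := by
          rw [← Finset.mul_sum, funext hHs, aux_K_sum _ hGm, Fintype.sum_prod_type]
          congr 1
          refine Finset.sum_congr rfl fun i _ => ?_
          rw [aux_K_sum _ (fun β => hGm (i, β))]
  have hmax : ∀ x, maxFn (fun y => ENNReal.ofReal (Real.sqrt (∑ i, Fs i y ^ 2))) x ≤
      ENNReal.ofReal B * auxK k H x := by
    intro x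
    unfold maxFn
    refine iSup₂_le fun r hr => ?_
    calc _ ≤ (volume (ball x r))⁻¹ * ∫⁻ y in ball x r, C * auxK k H y := by
          gcongr 1
          exact lintegral_mono_ae (ae_restrict_of_ae hpt)
      _ = (volume (ball x r))⁻¹ * (C * ∫⁻ y in ball x r, auxK k H y) := by
          rw [lintegral_const_mul' _ _ hCt]
      _ ≤ (volume (ball x r))⁻¹ * (C * (A * volume (ball x r) * auxK k H x)) := by
          gcongr
          exact aux_maxK hn hA hHm x hr
      _ = ((volume (ball x r))⁻¹ * volume (ball x r)) * (C * A * auxK k H x) := by ring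
      _ = _ := by
          rw [ENNReal.inv_mul_cancel (measure_ball_pos _ _ hr).ne' measure_ball_lt_top.ne, one_mul, hBe]
  set c : ℝ := γ * B / lam with hc
  have hc0 : 0 ≤ c := by positivity
  have hpot : ∀ x, rieszPot (k : ℝ) (fun y => c * h y) x =
      (ENNReal.ofReal γ)⁻¹ * (ENNReal.ofReal c * auxK k H x) := by
    intro x
    unfold rieszPot auxK
    rw [← lintegral_const_mul' _ _ ENNReal.ofReal_ne_top]
    congr 1
    refine lintegral_congr fun y => ?_
    rw [ENNReal.ofReal_mul hc0, mul_assoc]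
  unfold rieszCap
  refine (iInf₂_le (fun y => c * h y) ⟨hhL.const_mul c, fun x => mul_nonneg hc0 (hh0 x), ?_⟩).trans ?_
  swap
  · intro x hx
    have hx : ENNReal.ofReal lam < _ := hx
    have h1 := hx.le.trans (hmax x)
    rw [hpot]
    have hcc : ENNReal.ofReal c = ENNReal.ofReal γ * (ENNReal.ofReal lam)⁻¹ * ENNReal.ofReal B := by
      rw [hc, ENNReal.ofReal_div_of_pos hlam, ENNReal.ofReal_mul hγ.le, div_eq_mul_inv]
      ring
    have hγ0 : ENNReal.ofReal γ ≠ 0 := by simpa using hγ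
    have hl0 : ENNReal.ofReal lam ≠ 0 := by simpa using hlam
    calc (1 : ℝ≥0∞) = (ENNReal.ofReal γ)⁻¹ * ENNReal.ofReal γ * ((ENNReal.ofReal lam)⁻¹ * ENNReal.ofReal lam) := by
          rw [ENNReal.inv_mul_cancel hγ0 ENNReal.ofReal_ne_top,
            ENNReal.inv_mul_cancel hl0 ENNReal.ofReal_ne_top, one_mul]
      _ ≤ (ENNReal.ofReal γ)⁻¹ * ENNReal.ofReal γ * ((ENNReal.ofReal lam)⁻¹ *
            (ENNReal.ofReal B * auxK k H x)) := by gcongr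
      _ = _ := by rw [hcc]; ring
  · calc ∫⁻ y, ENNReal.ofReal (c * h y) ^ p
        ≤ ∫⁻ y, ENNReal.ofReal c ^ p * ((N : ℝ≥0∞) ^ (p - 1) * ∑ q, ENNReal.ofReal (G q y) ^ p) := by
          refine lintegral_mono fun y => ?_
          dsimp only
          rw [ENNReal.ofReal_mul hc0, ENNReal.mul_rpow_of_nonneg _ _ hp0.le]
          gcongr
          change H y ^ p ≤ _
          rw [hHs]
          exact ENNReal.rpow_sum_le_const_mul_sum_rpow _ _ hp
      _ = ENNReal.ofReal c ^ p * (N : ℝ≥0∞) ^ (p - 1) * ∑ q, ∫⁻ y, ENNReal.ofReal (G q y) ^ p := by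
          rw [lintegral_const_mul' _ _ (ENNReal.rpow_ne_top_of_nonneg hp0.le ENNReal.ofReal_ne_top),
            lintegral_const_mul' _ _ (ENNReal.rpow_ne_top_of_nonneg (by linarith) (by simp)),
            lintegral_finsetSum' _ (fun q _ => (hGm q).pow_const p), mul_assoc]
      _ ≤ _ := by
          rw [Fintype.sum_prod_type]
          gcongr with i _ β _
          · rw [ENNReal.ofReal_rpow_of_nonneg hc0 hp0.le, ← ENNReal.ofReal_natCast,
              ENNReal.ofReal_rpow_of_nonneg (by positivity) (by linarith),
              ← ENNReal.ofReal_mul (by positivity)]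
            apply ENNReal.ofReal_le_ofReal
            rw [hc, Real.div_rpow (by positivity) hlam.le, div_mul_eq_mul_div]
            gcongr
            linarith
          · simp only [hG]
            split_ifs
            · exact le_rfl
            · simp [hp0]
end

section
/- Let k ∈ ℕ, 1 ≤ p < ∞, and f ∈ W^{k,p}(ℝⁿ) (in particular f ∈ W^{1,p}(ℝⁿ)). Then there exists a non-decreasing sequence of closed sets A₁ ⊂ A₂ ⊂ ⋯ ⊂ ℝⁿ such that for each j the precise representative f* is Lipschitz continuous on A_j outside a set of Lebesgue measure zero, and the complement satisfies |ℝⁿ \ ⋃_{j=1}^∞ A_j| = 0, where |·| denotes Lebesgue measure. (One may take A_j := { x : M|∇f|(x) ≤ α_j } for any sequence α_j → ∞.) -/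
open MeasureTheory Filter Metric Set
open scoped ENNReal NNReal Topology

namespace LipApprox

lemma vol_ball_mul {n : ℕ} (x y : Euc n) {t : ℝ} (ht : 0 < t) (r : ℝ) :
    volume (ball x (t * r)) = ENNReal.ofReal (t ^ n) * volume (ball y r) := by
  rw [Measure.addHaar_ball_mul_of_pos volume x ht r, finrank_euclideanSpace_fin,
    Measure.addHaar_ball_center volume y r]

lemma vol_closedBall {n : ℕ} (x : Euc n) {r : ℝ} (hr : 0 < r) :
    volume (closedBall x r) = volume (ball x r) := by
  refine le_antisymm ?_ (measure_mono ball_subset_closedBall)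
  rw [← ball_union_sphere]
  refine (measure_union_le _ _).trans ?_
  rw [Measure.addHaar_sphere_of_ne_zero volume x hr.ne', add_zero]

lemma lintegral_scale {n : ℕ} (F : Euc n → ℝ≥0∞) (x : Euc n) {t : ℝ} (ht : 0 < t) (r : ℝ) :
    ENNReal.ofReal (t ^ n) * ∫⁻ z in ball x r, F (x + t • (z - x)) = ∫⁻ z in ball x (t * r), F z := by
  have h := lintegral_image_eq_lintegral_abs_det_fderiv_mul (volume : Measure (Euc n))
    (s := ball x r) (f := fun z => x + t • (z - x)) (f' := fun _ => t • ContinuousLinearMap.id ℝ (Euc n))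
    measurableSet_ball (fun z _ => by
      have := (((hasFDerivAt_id (𝕜 := ℝ) z).sub_const x).const_smul t).const_add x
      exact this.hasFDerivWithinAt) (fun a _ b _ hab => by
      have := add_left_cancel hab
      have := smul_right_injective _ ht.ne' this
      simpa using this) F
  have himg : (fun z => x + t • (z - x)) '' ball x r = ball x (t * r) := by
    ext w
    simp only [mem_image, mem_ball, dist_eq_norm]
    constructor
    · rintro ⟨z, hz, rfl⟩
      rw [add_sub_cancel_left, norm_smul, Real.norm_of_nonneg ht.le]
      exact mul_lt_mul_of_pos_left hz ht
    · intro hw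
      refine ⟨x + t⁻¹ • (w - x), ?_, ?_⟩
      · rw [add_sub_cancel_left, norm_smul, Real.norm_of_nonneg (inv_nonneg.2 ht.le)]
        rw [inv_mul_lt_iff₀ ht]; exact hw
      · rw [add_sub_cancel_left, smul_smul, mul_inv_cancel₀ ht.ne', one_smul]; abel
  rw [himg] at h
  rw [h, lintegral_const_mul']
  · congr 2
    rw [ContinuousLinearMap.det]
    simp [LinearMap.det_smul, abs_of_pos ht]
  · exact ENNReal.ofReal_ne_top

lemma enorm_sub_le {n : ℕ} {u : Euc n → ℝ} (hu : ContDiff ℝ 1 u) (x z : Euc n) :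
    ‖u z - u x‖ₑ ≤ ∫⁻ t in Ioc (0:ℝ) 1, ‖fderiv ℝ u (x + t • (z - x))‖ₑ * ‖z - x‖ₑ := by
  have hc : Continuous (fun t : ℝ => fderiv ℝ u (x + t • (z - x)) (z - x)) := by
    have := hu.continuous_fderiv one_ne_zero
    fun_prop
  have h : ∫ t in (0:ℝ)..1, fderiv ℝ u (x + t • (z - x)) (z - x) = u z - u x := by
    have := intervalIntegral.integral_eq_sub_of_hasDerivAt (a := 0) (b := 1)
      (f := fun t : ℝ => u (x + t • (z - x)))
      (f' := fun t : ℝ => fderiv ℝ u (x + t • (z - x)) (z - x)) (fun t _ => by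
        have h1 : HasFDerivAt u (fderiv ℝ u (x + t • (z - x))) (x + t • (z - x)) :=
          (hu.differentiable one_ne_zero _).hasFDerivAt
        have h2 : HasDerivAt (fun t : ℝ => x + t • (z - x)) (z - x) t := by
          simpa using ((hasDerivAt_id t).smul_const (z - x)).const_add x
        exact h1.comp_hasDerivAt t h2) (hc.intervalIntegrable _ _)
    simpa using this
  rw [← h, intervalIntegral.integral_of_le zero_le_one]
  refine (enorm_integral_le_lintegral_enorm _).trans (lintegral_mono fun t => ?_)
  exact ContinuousLinearMap.le_opENorm _ _

lemma avg_bound {n : ℕ} {u : Euc n → ℝ} (hu : ContDiff ℝ 1 u) (x : Euc n) (c : ℝ≥0∞)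
    (hc : ∀ s : ℝ, 0 < s → ∫⁻ z in ball x s, ‖fderiv ℝ u z‖ₑ ≤ c * volume (ball x s))
    {r : ℝ} (hr : 0 < r) :
    ∫⁻ z in ball x r, ‖u z - u x‖ₑ ≤ ENNReal.ofReal r * c * volume (ball x r) := by
  have hcf : Continuous (fderiv ℝ u) := hu.continuous_fderiv one_ne_zero
  calc ∫⁻ z in ball x r, ‖u z - u x‖ₑ
      ≤ ∫⁻ z in ball x r, ∫⁻ t in Ioc (0:ℝ) 1,
          ‖fderiv ℝ u (x + t • (z - x))‖ₑ * ENNReal.ofReal r := by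
        refine setLIntegral_mono' measurableSet_ball fun z hz => ?_
        refine (enorm_sub_le hu x z).trans (lintegral_mono fun t => ?_)
        gcongr
        rw [← ofReal_norm]
        exact ENNReal.ofReal_le_ofReal (by simpa [dist_eq_norm] using (mem_ball.1 hz).le)
    _ = ∫⁻ t in Ioc (0:ℝ) 1, ∫⁻ z in ball x r,
          ‖fderiv ℝ u (x + t • (z - x))‖ₑ * ENNReal.ofReal r := by
        refine lintegral_lintegral_swap ?_
        have : Continuous (fun q : Euc n × ℝ => ‖fderiv ℝ u (x + q.2 • (q.1 - x))‖ₑ) := by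
          fun_prop
        exact (this.measurable.mul_const _).aemeasurable
    _ ≤ ∫⁻ t in Ioc (0:ℝ) 1, ENNReal.ofReal r * c * volume (ball x r) := by
        refine setLIntegral_mono' measurableSet_Ioc fun t ht => ?_
        rw [lintegral_mul_const' _ _ ENNReal.ofReal_ne_top, mul_comm, mul_assoc]
        gcongr
        have h1 := hc (t * r) (mul_pos ht.1 hr)
        rw [← lintegral_scale _ x ht.1 r, vol_ball_mul x x ht.1 r, mul_left_comm] at h1
        refine (ENNReal.mul_le_mul_iff_right ?_ ENNReal.ofReal_ne_top).1 h1
        simpa using pow_pos ht.1 n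
    _ = _ := by simp

lemma lip_smooth {n : ℕ} {u : Euc n → ℝ} (hu : ContDiff ℝ 1 u) (c : ℝ≥0∞) (x y : Euc n)
    (hx : ∀ s : ℝ, 0 < s → ∫⁻ z in ball x s, ‖fderiv ℝ u z‖ₑ ≤ c * volume (ball x s))
    (hy : ∀ s : ℝ, 0 < s → ∫⁻ z in ball y s, ‖fderiv ℝ u z‖ₑ ≤ c * volume (ball y s)) :
    ‖u x - u y‖ₑ ≤ (1 + 2 * 2 ^ n) * c * edist x y := by
  rcases eq_or_ne x y with rfl | hxy
  · simp
  set r := dist x y with hr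
  have hr0 : 0 < r := dist_pos.2 hxy
  have hm : Measurable fun z => ‖u z - u x‖ₑ := by
    have := hu.continuous; fun_prop
  have h1 : ‖u x - u y‖ₑ * volume (ball x r) ≤
      ((1 + 2 * 2 ^ n) * c * edist x y) * volume (ball x r) := by
    calc ‖u x - u y‖ₑ * volume (ball x r) = ∫⁻ z in ball x r, ‖u x - u y‖ₑ := by simp
      _ ≤ ∫⁻ z in ball x r, (‖u z - u x‖ₑ + ‖u z - u y‖ₑ) := by
        refine lintegral_mono fun z => ?_
        have : u x - u y = (u z - u y) - (u z - u x) := by ring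
        rw [this, add_comm]
        exact _root_.enorm_sub_le
      _ = (∫⁻ z in ball x r, ‖u z - u x‖ₑ) + ∫⁻ z in ball x r, ‖u z - u y‖ₑ :=
        lintegral_add_left hm _
      _ ≤ (∫⁻ z in ball x r, ‖u z - u x‖ₑ) + ∫⁻ z in ball y (2 * r), ‖u z - u y‖ₑ := by
        gcongr
        apply ball_subset_ball'
        linarith
      _ ≤ ENNReal.ofReal r * c * volume (ball x r) +
          ENNReal.ofReal (2 * r) * c * volume (ball y (2 * r)) := by
        gcongr
        · exact avg_bound hu x c hx hr0
        · exact avg_bound hu y c hy (by positivity)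
      _ = _ := by
        rw [vol_ball_mul y x two_pos r, ENNReal.ofReal_mul two_pos.le, edist_dist, ← hr,
          ENNReal.ofReal_pow two_pos.le, ENNReal.ofReal_ofNat]
        ring
  exact (ENNReal.mul_le_mul_iff_left (measure_ball_pos _ _ hr0).ne' measure_ball_lt_top.ne).1 h1

lemma mollif_bound {n : ℕ} (φ : ContDiffBump (0 : Euc n)) (hφ : φ.rOut = 2 * φ.rIn)
    (γ : Euc n → ℝ≥0∞) (hγ : Measurable γ) (c : ℝ≥0∞) (x : Euc n)
    (hc : ∀ s : ℝ, 0 < s → ∫⁻ z in ball x s, γ z ≤ c * volume (ball x s))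
    {r : ℝ} (hr : 0 < r) :
    ∫⁻ z in ball x r, ∫⁻ y, ‖φ.normed volume (z - y)‖ₑ * γ y ≤ (4 ^ n * c) * volume (ball x r) := by
  have hε := φ.rIn_pos
  set ε := φ.rIn with hεd
  have hsupp : ∀ w : Euc n, 2 * ε ≤ ‖w‖ → φ.normed volume w = 0 := by
    intro w hw
    have : w ∉ Function.support (φ.normed volume) := by
      rw [φ.support_normed_eq]; simp [hφ, hw]
    simpa using this
  have hcont : Continuous (φ.normed (volume : Measure (Euc n))) := φ.continuous_normed
  rcases le_or_gt (2 * ε) r with h | h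
  · rw [lintegral_lintegral_swap]
    · calc ∫⁻ y, ∫⁻ z in ball x r, ‖φ.normed volume (z - y)‖ₑ * γ y
          ≤ ∫⁻ y, (ball x (2 * r)).indicator γ y := by
            refine lintegral_mono fun y => ?_
            by_cases hy : y ∈ ball x (2 * r)
            · rw [indicator_of_mem hy, lintegral_mul_const _ (by
                have : Continuous fun z => ‖φ.normed volume (z - y)‖ₑ := by fun_prop
                exact this.measurable)]
              refine (mul_le_mul_left ?_ _).trans (one_mul _).le
              refine (setLIntegral_le_lintegral _ _).trans ?_
              rw [lintegral_sub_right_eq_self (fun z => ‖φ.normed volume z‖ₑ) y]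
              have := ofReal_integral_norm_eq_lintegral_enorm
                (φ.integrable_normed (μ := (volume : Measure (Euc n))))
              rw [← this]
              have h2 : ∀ w, ‖φ.normed volume w‖ = φ.normed volume w := fun w =>
                Real.norm_of_nonneg (φ.nonneg_normed w)
              simp_rw [h2]
              simp [φ.integral_normed]
            · rw [indicator_of_notMem hy]
              refine le_of_eq ?_
              rw [setLIntegral_congr_fun measurableSet_ball (g := fun _ => 0)]
              · simp
              intro z hz
              have : φ.normed volume (z - y) = 0 := by
                apply hsupp
                have h1 := dist_triangle y z x
                rw [mem_ball] at hy hz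
                rw [← dist_eq_norm, dist_comm]
                linarith
              simp [this]
        _ = ∫⁻ y in ball x (2 * r), γ y := lintegral_indicator measurableSet_ball _
        _ ≤ c * volume (ball x (2 * r)) := hc _ (by positivity)
        _ = c * 2 ^ n * volume (ball x r) := by
            rw [vol_ball_mul x x two_pos, ENNReal.ofReal_pow two_pos.le, ENNReal.ofReal_ofNat]; ring
        _ ≤ _ := by
            rw [mul_comm c]
            gcongr
            norm_num
    · have : Continuous fun q : Euc n × Euc n => ‖φ.normed volume (q.1 - q.2)‖ₑ := by fun_prop
      exact (this.measurable.mul (hγ.comp measurable_snd)).aemeasurable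
  · have hV0 : volume (ball (0 : Euc n) ε) ≠ 0 := (measure_ball_pos _ _ hε).ne'
    have hVt : volume (ball (0 : Euc n) ε) ≠ ∞ := measure_ball_lt_top.ne
    have key : ∀ z ∈ ball x r, ∫⁻ y, ‖φ.normed volume (z - y)‖ₑ * γ y ≤ 4 ^ n * c := by
      intro z hz
      calc ∫⁻ y, ‖φ.normed volume (z - y)‖ₑ * γ y
          ≤ ∫⁻ y, (ball x (4 * ε)).indicator (fun y => (volume (ball (0 : Euc n) ε))⁻¹ * γ y) y := by
            refine lintegral_mono fun y => ?_
            by_cases hy : y ∈ ball x (4 * ε)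
            · rw [indicator_of_mem hy]
              gcongr
              have h1 := φ.normed_le_div_measure_closedBall_rIn (μ := volume) (z - y)
              rw [Real.enorm_of_nonneg (φ.nonneg_normed _)]
              refine (ENNReal.ofReal_le_ofReal h1).trans ?_
              rw [one_div, ENNReal.ofReal_inv_of_pos, Measure.real, ENNReal.ofReal_toReal]
              · gcongr
                exact ball_subset_closedBall
              · exact measure_closedBall_lt_top.ne
              · exact ENNReal.toReal_pos (measure_closedBall_pos _ _ hε).ne'
                  measure_closedBall_lt_top.ne
            · have : φ.normed volume (z - y) = 0 := by
                apply hsupp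
                have h1 := dist_triangle y z x
                rw [mem_ball] at hy hz
                rw [← dist_eq_norm, dist_comm]
                linarith
              simp [this]
        _ = (volume (ball (0 : Euc n) ε))⁻¹ * ∫⁻ y in ball x (4 * ε), γ y := by
            rw [lintegral_indicator measurableSet_ball, lintegral_const_mul _ hγ]
        _ ≤ (volume (ball (0 : Euc n) ε))⁻¹ * (c * volume (ball x (4 * ε))) := by
            gcongr
            exact hc _ (by positivity)
        _ = ((volume (ball (0 : Euc n) ε))⁻¹ * volume (ball (0 : Euc n) ε)) * (4 ^ n * c) := by
            rw [vol_ball_mul x 0 (by norm_num : (0:ℝ) < 4), ENNReal.ofReal_pow (by norm_num),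
              ENNReal.ofReal_ofNat]; ring
        _ = _ := by rw [ENNReal.inv_mul_cancel hV0 hVt, one_mul]
    calc _ ≤ ∫⁻ z in ball x r, 4 ^ n * c := setLIntegral_mono' measurableSet_ball key
      _ = _ := by simp

lemma mderiv_single {n : ℕ} (i : Fin n) (η : Euc n → ℝ) :
    mderiv (Pi.single i 1) η = fun x => fderiv ℝ η x (EuclideanSpace.single i 1) := by
  have : ((List.finRange n).flatMap fun j => List.replicate ((Pi.single i 1 : Fin n → ℕ) j) j) = [i] := by
    have h : ∀ l : List (Fin n), l.flatMap (fun j => List.replicate ((Pi.single i 1 : Fin n → ℕ) j) j)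
        = l.filter (fun j => j = i) := by
      intro l
      induction l with
      | nil => simp
      | cons a l ih =>
        rw [List.flatMap_cons, ih]
        by_cases h : a = i
        · subst h; simp
        · simp [h]
    rw [h]
    have h2 := List.filter_beq (l := List.finRange n) i
    simp only [List.count_finRange, List.replicate_one] at h2
    rw [← h2]
    exact List.filter_congr fun a _ => by by_cases h : a = i <;> simp [h]
  rw [mderiv, this]; rfl

lemma mdeg_single {n : ℕ} (i : Fin n) : mdeg (Pi.single i 1 : Fin n → ℕ) = 1 := by
  simp [mdeg]

open Convolution ContinuousLinearMap in
lemma grad_bound {n : ℕ} (φ : ContDiffBump (0 : Euc n)) (f : Euc n → ℝ) (g : Euc n → Euc n)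
    (hf : LocallyIntegrable f volume) (hg : IsWeakGradient f g) (γ : Euc n → ℝ≥0∞)
    (hγ : (fun y => ‖g y‖ₑ) =ᵐ[volume] γ) (x : Euc n) :
    ‖fderiv ℝ (φ.normed volume ⋆[lsmul ℝ ℝ, volume] f) x‖ₑ ≤
      n * ∫⁻ y, ‖φ.normed volume (x - y)‖ₑ * γ y := by
  set ψ := φ.normed (volume : Measure (Euc n)) with hψ
  have hψc : HasCompactSupport ψ := φ.hasCompactSupport_normed
  have hψs : ContDiff ℝ (⊤ : ℕ∞) ψ := φ.contDiff_normed
  have hψ1 : ContDiff ℝ 1 ψ := φ.contDiff_normed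
  set I := ∫⁻ y, ‖ψ (x - y)‖ₑ * γ y with hI
  have hD : HasFDerivAt (ψ ⋆[lsmul ℝ ℝ, volume] f)
      ((f ⋆[(lsmul ℝ ℝ).flip.precompR (Euc n), volume] fderiv ℝ ψ) x) x := by
    have := hψc.hasFDerivAt_convolution_right (lsmul ℝ ℝ : ℝ →L[ℝ] ℝ →L[ℝ] ℝ).flip hf hψ1 x
    rwa [convolution_flip] at this
  set D := (f ⋆[(lsmul ℝ ℝ).flip.precompR (Euc n), volume] fderiv ℝ ψ) x with hDd
  rw [hD.fderiv]
  have hpart : ∀ i : Fin n, ‖D (EuclideanSpace.single i 1)‖ₑ ≤ I := by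
    intro i
    have h1 : D (EuclideanSpace.single i 1) =
        ∫ y, f y * fderiv ℝ ψ (x - y) (EuclideanSpace.single i 1) := by
      rw [hDd, convolution_precompR_apply _ hf (hψc.fderiv ℝ)
        (hψ1.continuous_fderiv one_ne_zero)]
      simp [convolution_def, mul_comm]
    have hη : ∀ y, fderiv ℝ (fun y => ψ (x - y)) y (EuclideanSpace.single i 1) =
        - fderiv ℝ ψ (x - y) (EuclideanSpace.single i 1) := by
      intro y
      have h2 : HasFDerivAt ψ (fderiv ℝ ψ (x - y)) (x - y) :=
        (hψ1.differentiable one_ne_zero _).hasFDerivAt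
      have h3 := h2.comp y ((hasFDerivAt_id (𝕜 := ℝ) y).const_sub x)
      have h4 : fderiv ℝ (fun y => ψ (x - y)) y = _ := h3.fderiv
      rw [h4]; simp
    have h2 := hg i (fun y => ψ (x - y)) (by fun_prop)
      (hψc.comp_homeomorph (Homeomorph.subLeft x))
    rw [mderiv_single, mdeg_single] at h2
    simp only [hη, mul_neg, integral_neg, pow_one, neg_mul, one_mul, neg_inj] at h2
    rw [h1, h2]
    refine (enorm_integral_le_lintegral_enorm _).trans ?_
    refine lintegral_mono_ae ?_
    filter_upwards [hγ] with y hy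
    rw [enorm_mul, mul_comm, ← hy]
    gcongr
    rw [← ofReal_norm, ← ofReal_norm]
    refine ENNReal.ofReal_le_ofReal ((norm_inner_le_norm _ _).trans ?_)
    simp
  rcases eq_or_ne I ∞ with hIt | hIt
  · rcases Nat.eq_zero_or_pos n with rfl | hn
    · have : D = 0 := by
        ext v; rw [Subsingleton.elim v 0]; simp
      rw [this]
      refine le_of_eq_of_le ?_ zero_le
      rw [← ofReal_norm]; simp
    · rw [hIt, ENNReal.mul_top (by exact_mod_cast hn.ne')]; exact le_top
  have hpart' : ∀ i : Fin n, ‖D (EuclideanSpace.single i 1)‖ ≤ I.toReal := by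
    intro i
    have := ENNReal.toReal_mono hIt (hpart i)
    simpa using this
  have hfin : ‖D‖ ≤ n * I.toReal := by
    refine ContinuousLinearMap.opNorm_le_bound _ (by positivity) fun v => ?_
    have hv : v = ∑ i, v i • EuclideanSpace.single i (1:ℝ) := by
      ext j; simp [Finset.sum_apply, Pi.single_apply]
    conv_lhs => rw [hv]
    rw [map_sum]
    calc _ ≤ ∑ i : Fin n, ‖D (v i • EuclideanSpace.single i (1:ℝ))‖ := norm_sum_le _ _
      _ ≤ ∑ i : Fin n, ‖v‖ * I.toReal := by
        refine Finset.sum_le_sum fun i _ => ?_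
        rw [map_smul, norm_smul]
        exact mul_le_mul (PiLp.norm_apply_le v i) (hpart' i) (norm_nonneg _) (norm_nonneg _)
      _ = _ := by simp; ring
  rw [← ofReal_norm]
  refine (ENNReal.ofReal_le_ofReal hfin).trans ?_
  rw [ENNReal.ofReal_mul (by positivity), ENNReal.ofReal_toReal hIt, ENNReal.ofReal_natCast]

lemma max_finite {n : ℕ} (γ : Euc n → ℝ≥0∞) (hγ : Measurable γ) {p : ℝ} (hp : 1 ≤ p)
    (hfin : ∫⁻ y, γ y ^ p ≠ ∞) :
    ∀ᵐ x, ∃ j : ℕ, ∀ r : ℝ, 0 < r → ∫⁻ z in ball x r, γ z ≤ j * volume (ball x r) := by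
  have hm : Measurable fun y => γ y ^ p := hγ.pow_const p
  filter_upwards [(Besicovitch.vitaliFamily (volume : Measure (Euc n))).ae_tendsto_lintegral_div
    hm.aemeasurable hfin, ae_lt_top hm hfin] with x hx hxt
  have h1 := hx.comp (Besicovitch.tendsto_filterAt volume x)
  have h2 := h1.eventually (eventually_lt_nhds (b := γ x ^ p + 1) (by exact ENNReal.lt_add_right hxt.ne one_ne_zero))
  obtain ⟨δ, hδ, hδ2⟩ := (mem_nhdsGT_iff_exists_Ioo_subset).1 h2
  have hδ : 0 < δ := hδ
  set V := volume (ball x δ)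
  have hV : V ≠ 0 := (measure_ball_pos _ _ hδ).ne'
  set C : ℝ≥0∞ := (γ x ^ p + 1) + (∫⁻ y, γ y ^ p) / V with hC
  have hCt : C ≠ ∞ := by
    simp only [hC, ne_eq, ENNReal.add_eq_top, not_or]
    exact ⟨⟨hxt.ne, by simp⟩, (ENNReal.div_lt_top hfin hV).ne⟩
  have key : ∀ r : ℝ, 0 < r → ∫⁻ z in ball x r, γ z ^ p ≤ C * volume (ball x r) := by
    intro r hr
    rcases lt_or_ge r δ with h | h
    · have h3 := hδ2 ⟨hr, h⟩
      change (∫⁻ z in closedBall x r, γ z ^ p) / volume (closedBall x r) < γ x ^ p + 1 at h3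
      rw [ENNReal.div_lt_iff (Or.inl (measure_closedBall_pos _ _ hr).ne')
        (Or.inl measure_closedBall_lt_top.ne), vol_closedBall x hr] at h3
      calc ∫⁻ z in ball x r, γ z ^ p ≤ ∫⁻ z in closedBall x r, γ z ^ p :=
            lintegral_mono_set ball_subset_closedBall
        _ ≤ (γ x ^ p + 1) * volume (ball x r) := h3.le
        _ ≤ _ := by
          gcongr
          exact le_self_add
    · calc ∫⁻ z in ball x r, γ z ^ p ≤ ∫⁻ z, γ z ^ p := setLIntegral_le_lintegral _ _
        _ = (∫⁻ z, γ z ^ p) / V * V := (ENNReal.div_mul_cancel hV measure_ball_lt_top.ne).symm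
        _ ≤ C * volume (ball x r) := by
          gcongr
          · exact le_add_self
          · exact measure_mono (ball_subset_ball h)
  obtain ⟨j, hj⟩ := ENNReal.exists_nat_gt (r := 1 + C) (by simp [hCt])
  refine ⟨j, fun r hr => ?_⟩
  calc ∫⁻ z in ball x r, γ z ≤ ∫⁻ z in ball x r, (1 + γ z ^ p) := by
        refine lintegral_mono fun z => ?_
        rcases le_total (γ z) 1 with h | h
        · exact h.trans le_self_add
        · refine le_trans ?_ le_add_self
          exact ENNReal.le_rpow_self_of_one_le h hp
    _ = volume (ball x r) + ∫⁻ z in ball x r, γ z ^ p := by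
        rw [lintegral_add_left measurable_const]; simp
    _ ≤ volume (ball x r) + C * volume (ball x r) := by gcongr; exact key r hr
    _ = (1 + C) * volume (ball x r) := by ring
    _ ≤ _ := by gcongr

lemma preciseRep_ae {n : ℕ} (f : Euc n → ℝ) (hf : LocallyIntegrable f volume) :
    ∀ᵐ x, preciseRep f x = f x := by
  filter_upwards [(Besicovitch.vitaliFamily (volume : Measure (Euc n))).ae_tendsto_average hf]
    with x hx
  have h1 := hx.comp (Besicovitch.tendsto_filterAt volume x)
  have h2 : Tendsto (fun ε : ℝ => ⨍ y in ball x ε, f y) (𝓝[>] (0:ℝ)) (𝓝 (f x)) := by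
    refine h1.congr' ?_
    filter_upwards [self_mem_nhdsWithin] with ε hε
    refine setAverage_congr ?_
    refine (ae_eq_of_subset_of_measure_ge ball_subset_closedBall ?_
      measurableSet_ball.nullMeasurableSet measure_closedBall_lt_top.ne).symm
    rw [vol_closedBall x hε]
  have hex : ∃ L : ℝ, Tendsto (fun ε : ℝ => ⨍ y in ball x ε, f y) (𝓝[>] (0:ℝ)) (𝓝 L) := ⟨_, h2⟩
  rw [preciseRep, preciseRepV, dif_pos hex]
  exact tendsto_nhds_unique hex.choose_spec h2

end LipApprox

/-- Remark 4.7: Lipschitz approximation of a `W^{k,p}` function outside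
sets of Lebesgue measure zero. -/
theorem lipschitz_approximation_lebesgue {n k : ℕ} {p : ℝ} (hp : 1 ≤ p)
    (f : Euc n → ℝ) (g : Euc n → Euc n)
    (hf : MemLp f (ENNReal.ofReal p) volume)
    (hDf : ∀ α : Fin n → ℕ, mdeg α ≤ k → ∃ h : Euc n → ℝ,
      MemLp h (ENNReal.ofReal p) volume ∧ IsWeakDeriv α f h)
    (hg : IsWeakGradient f g) (hgp : MemLp g (ENNReal.ofReal p) volume) :
    ∃ A : ℕ → Set (Euc n),
      (∀ j, IsClosed (A j)) ∧ (∀ j, A j ⊆ A (j + 1)) ∧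
      (∀ j, ∃ N : Set (Euc n), volume N = 0 ∧
        ∃ K : ℝ≥0, LipschitzOnWith K (preciseRep f) (A j \ N)) ∧
      volume ((Set.univ : Set (Euc n)) \ ⋃ j, A j) = 0 := by
  have hp0 : 0 < p := by linarith
  have hp1 : (1 : ℝ≥0∞) ≤ ENNReal.ofReal p := by simpa using ENNReal.ofReal_le_ofReal hp
  have hfl : LocallyIntegrable f volume := hf.locallyIntegrable hp1
  have hgm : AEMeasurable (fun y => ‖g y‖ₑ) volume := hgp.1.enorm
  set γ : Euc n → ℝ≥0∞ := hgm.mk _ with hγd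
  have hγm : Measurable γ := hgm.measurable_mk
  have hγ : (fun y => ‖g y‖ₑ) =ᵐ[volume] γ := hgm.ae_eq_mk
  have hfin : ∫⁻ y, γ y ^ p ≠ ∞ := by
    have h1 := lintegral_rpow_enorm_lt_top_of_eLpNorm_lt_top (by simpa using hp0)
      ENNReal.ofReal_ne_top hgp.2
    rw [ENNReal.toReal_ofReal hp0.le] at h1
    rw [← lintegral_congr_ae (f := fun y => ‖g y‖ₑ ^ p)]
    · exact h1.ne
    · filter_upwards [hγ] with y hy
      rw [← hy]
  let B : ℕ → Set (Euc n) := fun j =>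
    {x | ∀ r : ℝ, 0 < r → ∫⁻ z in ball x r, γ z ≤ j * volume (ball x r)}
  have hBmono : ∀ j, B j ⊆ B (j + 1) := fun j x hx r hr => (hx r hr).trans (by gcongr; simp)
  have hcl : ∀ j, ∀ x ∈ closure (B j), ∀ r : ℝ, 0 < r →
      ∫⁻ z in ball x r, γ z ≤ (j * 2 ^ n) * volume (ball x r) := by
    intro j x hx r hr
    obtain ⟨y, hy, hxy⟩ := Metric.mem_closure_iff.1 hx r hr
    calc ∫⁻ z in ball x r, γ z ≤ ∫⁻ z in ball y (2 * r), γ z := by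
          refine lintegral_mono_set (ball_subset_ball' ?_)
          linarith
      _ ≤ j * volume (ball y (2 * r)) := hy _ (by positivity)
      _ = _ := by
          rw [LipApprox.vol_ball_mul y x two_pos, ENNReal.ofReal_pow two_pos.le,
            ENNReal.ofReal_ofNat]; ring
  let φ : ℕ → ContDiffBump (0 : Euc n) := fun m =>
    ⟨1 / ((m : ℝ) + 1), 2 * (1 / ((m : ℝ) + 1)), by positivity, by
      have : 0 < 1 / ((m : ℝ) + 1) := by positivity
      linarith⟩
  have hφlim : Tendsto (fun m => (φ m).rOut) atTop (𝓝 0) := by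
    have := (tendsto_one_div_add_atTop_nhds_zero_nat (𝕜 := ℝ)).const_mul 2
    rw [mul_zero] at this
    exact this
  have hconv := ContDiffBump.ae_convolution_tendsto_right_of_locallyIntegrable (μ := volume)
    (K := 2) hφlim (Eventually.of_forall fun m => le_rfl) hfl
  have hgood := hconv.and (LipApprox.preciseRep_ae f hfl)
  refine ⟨fun j => closure (B j), fun j => isClosed_closure, fun j => closure_mono (hBmono j),
    fun j => ⟨_, ae_iff.1 hgood, ?_⟩, ?_⟩
  · set c : ℝ≥0∞ := n * (4 ^ n * (j * 2 ^ n)) with hc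
    have hct : (1 + 2 * 2 ^ n) * c ≠ ∞ := by
      simp [hc, ENNReal.mul_eq_top, ENNReal.add_eq_top]
    refine ⟨((1 + 2 * 2 ^ n) * c).toNNReal, fun x hx y hy => ?_⟩
    obtain ⟨hxA, hxN⟩ := hx
    obtain ⟨hyA, hyN⟩ := hy
    simp only [mem_ofPred_eq, not_not] at hxN hyN
    rw [ENNReal.coe_toNNReal hct, hxN.2, hyN.2]
    have hb : ∀ w ∈ closure (B j), ∀ m : ℕ, ∀ s : ℝ, 0 < s → ∫⁻ z in ball w s,
        ‖fderiv ℝ (convolution ((φ m).normed volume) f (ContinuousLinearMap.lsmul ℝ ℝ) volume) z‖ₑ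
          ≤ c * volume (ball w s) := by
      intro w hw m s hs
      calc _ ≤ ∫⁻ z in ball w s, n * ∫⁻ y, ‖(φ m).normed volume (z - y)‖ₑ * γ y :=
            lintegral_mono fun z => LipApprox.grad_bound (φ m) f g hfl hg γ hγ z
        _ = n * ∫⁻ z in ball w s, ∫⁻ y, ‖(φ m).normed volume (z - y)‖ₑ * γ y :=
            lintegral_const_mul' _ _ (by simp)
        _ ≤ n * ((4 ^ n * (j * 2 ^ n)) * volume (ball w s)) := by
            gcongr
            exact LipApprox.mollif_bound (φ m) rfl γ hγm _ w (hcl j w hw) hs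
        _ = _ := by rw [hc]; ring
    have hlim := (hxN.1.edist hyN.1)
    refine le_of_tendsto hlim (Eventually.of_forall fun m => ?_)
    rw [edist_eq_enorm_sub]
    refine LipApprox.lip_smooth ?_ c x y (hb x hxA m) (hb y hyA m)
    exact (φ m).hasCompactSupport_normed.contDiff_convolution_left (n := 1) _
      (φ m).contDiff_normed hfl
  · have := LipApprox.max_finite γ hγm hp hfin
    refine measure_mono_null ?_ (ae_iff.1 this)
    rintro x ⟨-, hx⟩ ⟨j, hj⟩
    exact hx (mem_iUnion.2 ⟨j, subset_closure hj⟩)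
end
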